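/- arXiv:2512.16894 — 8 statements merged into one kernel-verified Lean document; each statement's English description precedes it below -/
import Mathlib

section
/- Let Ξ be a nonzero Borel measure on 𝓔 with Ξ({y ∈ 𝓔 : y₁ = 0}) = 0, let α > 0, and suppose that (Ξ; α) is G-growing for some family G = (G_x)_{x>0}. Then for every γ > 0 such that ∫_𝓔 y₁^γ Ξ(dy) < ∞ one has α < γ; equivalently, α ≤ inf{γ > 0 : ∫_𝓔 y₁^γ Ξ(dy) < ∞}. -/
open MeasureTheory Set Filter

/-- The space `𝓔` of sequences `y = (y₀, y₁, …)` of reals with `y₀ > 0`,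
`y₁ ≥ y₂ ≥ ⋯ ≥ 0` and `y_i → 0`. -/
def growE : Set (ℕ → ℝ) :=
  {y | 0 < y 0 ∧ (∀ i, 1 ≤ i → y (i + 1) ≤ y i) ∧ (∀ i, 1 ≤ i → 0 ≤ y i) ∧
    Tendsto y atTop (nhds 0)}

/-- The pair `(Ξ; α)` is `G`-growing: there is a Borel set `E₀` of full `Ξ`-measure such that
`G` is a multiplicative one-parameter family of maps of `𝓔` which quasi-preserves `Ξ`
(with index `α`), is coordinate-wise monotone on `E₀`, and satisfies the regularity
conditions (joint continuity on `(0,∞) × E₀` and the integrated Lipschitz estimate on the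
first coordinate). -/
def IsGGrowing (Ξ : Measure growE) (α : ℝ) (G : ℝ → growE → growE) : Prop :=
  ∃ E₀ : Set growE, MeasurableSet E₀ ∧ Ξ E₀ᶜ = 0 ∧
    G 1 = id ∧
    (∀ x > (0:ℝ), ∀ x' > (0:ℝ), G x ∘ G x' = G (x * x')) ∧
    (∀ x > (0:ℝ), Measurable (G x)) ∧
    (∀ x > (0:ℝ), Measure.map (G x) Ξ = ENNReal.ofReal (x ^ (-α)) • Ξ) ∧
    (∀ y ∈ E₀, ∀ i : ℕ, MonotoneOn (fun x : ℝ => x * (G x y).val i) (Ioi 0)) ∧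
    (∀ x > (0:ℝ), MapsTo (G x) E₀ E₀) ∧
    ContinuousOn (fun p : ℝ × growE => G p.1 p.2) ((Ioi (0:ℝ)) ×ˢ E₀) ∧
    (∀ K : Set ℝ, IsCompact K → K ⊆ Ioi 0 → ∃ C > (0:ℝ), ∀ x ∈ K, ∀ x' ∈ K,
      (∫⁻ y : growE, ENNReal.ofReal
          ((x * ((G x y).val 0 - 1) - x' * ((G x' y).val 0 - 1)) ^ 2) ∂Ξ)
        ≤ ENNReal.ofReal (C * (x - x') ^ 2))

/-! Put `d = x ^ γ` and `g = y₁ ^ γ`. Monotonicity gives `g ≤ d * g ∘ G_x` for `x ≥ 1`, while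
`G_x` shrinks `Ξ` by the factor `x ^ (-α)`, which is at most `d⁻¹` if `γ ≤ α`. Truncating at height
`d * s` before changing variables yields `∫ min g (d * s) ≤ ∫ min g s`. With `s` fixed and `x → ∞`,
this bounds `∫ min g 1` by `∫ min g s`, which tends to `0` with `s` because `g` is integrable. Hence
`g = 0` almost everywhere, contrary to `y₁ > 0`. -/

open scoped ENNReal Topology

section Truncation

variable {X : Type*} [MeasurableSpace X] {μ : Measure X} {g : X → ℝ≥0∞}

theorem tendsto_lintegral_min_const_zero (hg : AEMeasurable g μ) (hint : ∫⁻ y, g y ∂μ ≠ ∞) :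
    Tendsto (fun s : ℝ≥0∞ => ∫⁻ y, min (g y) s ∂μ) (𝓝 0) (𝓝 0) := by
  refine tendsto_of_seq_tendsto fun s hs => ?_
  have hpointwise (y : X) : Tendsto (fun n => min (g y) (s n)) atTop (𝓝 0) := by
    simpa only [min_zero] using tendsto_const_nhds.min hs
  simpa only [lintegral_zero, Function.comp_def] using
    tendsto_lintegral_of_dominated_convergence' g (fun n => hg.min aemeasurable_const)
      (fun n => ae_of_all μ fun y => min_le_left (g y) (s n)) hint (ae_of_all μ hpointwise)

theorem lintegral_min_mul_le_lintegral_min {T : X → X} {d : ℝ≥0∞} (hg : AEMeasurable g μ)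
    (hT : AEMeasurable T μ) (hmap : μ.map T ≤ d⁻¹ • μ)
    (hle : ∀ᵐ y ∂μ, g y ≤ d * g (T y)) (s : ℝ≥0∞) :
    ∫⁻ y, min (g y) (d * s) ∂μ ≤ ∫⁻ y, min (g y) s ∂μ := by
  have hmin : AEMeasurable (fun y => min (g y) s) (μ.map T) :=
    (hg.mono_ac (Measure.absolutelyContinuous_of_le_smul hmap)).min aemeasurable_const
  calc
    ∫⁻ y, min (g y) (d * s) ∂μ ≤ ∫⁻ y, d * min (g (T y)) s ∂μ := by
      refine lintegral_mono_ae (hle.mono fun y hy => ?_)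
      rw [mul_min]
      exact min_le_min_right (d * s) hy
    _ = d * ∫⁻ y, min (g y) s ∂μ.map T := by
      rw [lintegral_map' hmin hT]
      exact lintegral_const_mul'' d (hmin.comp_aemeasurable hT)
    _ ≤ d * ∫⁻ y, min (g y) s ∂(d⁻¹ • μ) := by gcongr
    _ = d * d⁻¹ * ∫⁻ y, min (g y) s ∂μ := by
      rw [lintegral_smul_measure, smul_eq_mul, mul_assoc]
    _ ≤ ∫⁻ y, min (g y) s ∂μ := mul_le_of_le_one_left' (ENNReal.mul_inv_le_one d)

theorem ae_eq_zero_of_ae_le_mul_comp {ι : Type*} {l : Filter ι} [l.NeBot] {T : ι → X → X}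
    {d : ι → ℝ≥0∞} (hg : AEMeasurable g μ) (hint : ∫⁻ y, g y ∂μ ≠ ∞) (hd : Tendsto d l (𝓝 ∞))
    (hT : ∀ᶠ i in l, AEMeasurable (T i) μ) (hmap : ∀ᶠ i in l, μ.map (T i) ≤ (d i)⁻¹ • μ)
    (hle : ∀ᶠ i in l, ∀ᵐ y ∂μ, g y ≤ d i * g (T i y)) :
    g =ᵐ[μ] 0 := by
  have hbound (s : ℝ≥0∞) (hs : 0 < s) : ∫⁻ y, min (g y) 1 ∂μ ≤ ∫⁻ y, min (g y) s ∂μ := by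
    have hds : Tendsto (fun i => d i * s) l (𝓝 ∞) := by
      simpa only [ENNReal.top_mul hs.ne'] using
        ENNReal.Tendsto.mul_const (b := s) hd (.inl ENNReal.top_ne_zero)
    obtain ⟨i, hi, hTi, hmapi, hlei⟩ :=
      ((hds.eventually_const_le ENNReal.one_lt_top).and (hT.and (hmap.and hle))).exists
    calc
      ∫⁻ y, min (g y) 1 ∂μ ≤ ∫⁻ y, min (g y) (d i * s) ∂μ := by gcongr
      _ ≤ ∫⁻ y, min (g y) s ∂μ := lintegral_min_mul_le_lintegral_min hg hTi hmapi hlei s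
  have hlim : Tendsto (fun s : ℝ≥0∞ => ∫⁻ y, min (g y) s ∂μ) (𝓝[>] 0) (𝓝 0) :=
    (tendsto_lintegral_min_const_zero hg hint).mono_left nhdsWithin_le_nhds
  have hzero : ∫⁻ y, min (g y) 1 ∂μ = 0 :=
    nonpos_iff_eq_zero.mp (ge_of_tendsto hlim (eventually_mem_nhdsWithin.mono hbound))
  filter_upwards [(lintegral_eq_zero_iff' (hg.min aemeasurable_const)).mp hzero] with y hy
  exact (min_eq_bot.mp hy).resolve_right one_ne_zero

end Truncation

theorem growing_upper_bound_on_alpha_general {X : Type*} [MeasurableSpace X] {μ : Measure X}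
    (hμ : μ ≠ 0) {f : X → ℝ} (hf : AEMeasurable f μ) (hpos : ∀ᵐ y ∂μ, 0 < f y)
    {α : ℝ} {T : ℝ → X → X} (hT : ∀ x ≥ 1, AEMeasurable (T x) μ)
    (hmap : ∀ x ≥ 1, μ.map (T x) ≤ ENNReal.ofReal (x ^ (-α)) • μ)
    (hle : ∀ x ≥ 1, ∀ᵐ y ∂μ, f y ≤ x * f (T x y))
    {γ : ℝ} (hγ : 0 < γ) (hint : ∫⁻ y, ENNReal.ofReal (f y ^ γ) ∂μ < ∞) : α < γ := by
  by_contra! hγα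
  have hd : Tendsto (fun x : ℝ => ENNReal.ofReal (x ^ γ)) atTop (𝓝 ∞) :=
    ENNReal.tendsto_ofReal_atTop.comp (tendsto_rpow_atTop hγ)
  have hmap' (x : ℝ) (hx : 1 ≤ x) : μ.map (T x) ≤ (ENNReal.ofReal (x ^ γ))⁻¹ • μ := by
    have hx0 : 0 < x := by positivity
    rw [← ENNReal.ofReal_inv_of_pos (by positivity), ← Real.rpow_neg hx0.le]
    exact (hmap x hx).trans (by gcongr)
  have hle' (x : ℝ) (hx : 1 ≤ x) : ∀ᵐ y ∂μ,
      ENNReal.ofReal (f y ^ γ) ≤ ENNReal.ofReal (x ^ γ) * ENNReal.ofReal (f (T x y) ^ γ) := by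
    filter_upwards [hle x hx, hpos] with y hy hfy
    have hx0 : 0 < x := by positivity
    have hfT : 0 < f (T x y) := pos_of_mul_pos_right (hfy.trans_le hy) hx0.le
    rw [← ENNReal.ofReal_mul (by positivity), ← Real.mul_rpow hx0.le hfT.le]
    gcongr
  have hzero : (fun y => ENNReal.ofReal (f y ^ γ)) =ᵐ[μ] 0 :=
    ae_eq_zero_of_ae_le_mul_comp (hf.pow_const γ).ennreal_ofReal hint.ne hd
      ((eventually_ge_atTop 1).mono hT) ((eventually_ge_atTop 1).mono hmap')
      ((eventually_ge_atTop 1).mono hle')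
  have hfalse : ∀ᵐ _ ∂μ, False := by
    filter_upwards [hzero, hpos] with y hy hfy
    exact (ENNReal.ofReal_pos.mpr (Real.rpow_pos_of_pos hfy γ)).ne' hy
  exact hμ (ae_eq_bot.mp (eventually_false_iff_eq_bot.mp hfalse))

namespace IsGGrowing

variable {Ξ : Measure growE} {α : ℝ} {G : ℝ → growE → growE} {x : ℝ}

theorem measurable (hG : IsGGrowing Ξ α G) (hx : 0 < x) : Measurable (G x) := by
  obtain ⟨E₀, -, -, -, -, hmeas, -⟩ := hG
  exact hmeas x hx

theorem map_eq (hG : IsGGrowing Ξ α G) (hx : 0 < x) :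
    Ξ.map (G x) = ENNReal.ofReal (x ^ (-α)) • Ξ := by
  obtain ⟨E₀, -, -, -, -, -, hmap, -⟩ := hG
  exact hmap x hx

theorem ae_coord_le_mul_coord (hG : IsGGrowing Ξ α G) (hx : 1 ≤ x) (i : ℕ) :
    ∀ᵐ y ∂Ξ, y.val i ≤ x * (G x y).val i := by
  obtain ⟨E₀, -, hE₀, hone, -, -, -, hmono, -⟩ := hG
  filter_upwards [mem_ae_iff.mpr hE₀] with y hy
  simpa only [hone, id, one_mul] using
    hmono y hy i (mem_Ioi.mpr one_pos) (mem_Ioi.mpr (one_pos.trans_le hx)) hx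

end IsGGrowing

theorem growE_coord_nonneg (y : growE) : ∀ i, 0 ≤ y.val i
  | 0 => y.property.1.le
  | i + 1 => y.property.2.2.1 (i + 1) i.succ_pos

/-- **Upper bound on the self-similarity parameter.**  If `Ξ` is a nonzero measure on `𝓔`
giving no mass to `{y : y₁ = 0}`, `α > 0` and `(Ξ; α)` is `G`-growing, then for every
`γ > 0` with `∫ y₁^γ dΞ < ∞` one has `α < γ`. -/
theorem growing_upper_bound_on_alpha
    (Ξ : Measure growE) (hΞ : Ξ ≠ 0)
    (h1 : Ξ {y : growE | y.val 1 = 0} = 0)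
    (α : ℝ) (hα : 0 < α) (G : ℝ → growE → growE)
    (hG : IsGGrowing Ξ α G) :
    ∀ γ > (0:ℝ),
      (∫⁻ y : growE, ENNReal.ofReal ((y.val 1) ^ γ) ∂Ξ) < ⊤ → α < γ := by
  have hpos : ∀ᵐ y ∂Ξ, 0 < y.val 1 :=
    (measure_eq_zero_iff_ae_notMem.mp h1).mono fun y hy =>
      (growE_coord_nonneg y 1).lt_of_ne' hy
  have hcoord : Measurable fun y : growE => y.val 1 :=
    (measurable_pi_apply 1).comp measurable_subtype_coe
  exact fun γ hγ => growing_upper_bound_on_alpha_general hΞ hcoord.aemeasurable hpos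
    (fun x hx => (hG.measurable (one_pos.trans_le hx)).aemeasurable)
    (fun x hx => (hG.map_eq (one_pos.trans_le hx)).le)
    (fun x hx => hG.ae_coord_le_mul_coord hx 1) hγ
end

section
/- Let c > 0 and let f : [0,1) → [0,1) be a continuous bijection whose pushforward measure satisfies f_♯ν = c·ν. Then f(s) = I⁻¹(I(s)/c) for every s ∈ [0,1). In particular, for every α > 0 and t ∈ ℝ there is exactly one continuous bijection f_t of [0,1) onto itself with (f_t)_♯ν = e^{αt}·ν, namely f_t(s) = I⁻¹(e^{−αt}·I(s)). -/
open MeasureTheory Set Filter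

/-!
A continuous bijection of `[a,b)` is strictly increasing, since a decreasing one would attain its
maximum at `a`, while `[a,b)` has no maximum. For increasing `f` the preimage of `(-∞, f s]` is
`(-∞, s]` within `[a,b)`, so `f_♯ν = c·ν` says exactly that `I s = c * I (f s)` for all `s`, which
determines `f` because the distribution function `I` is injective. Conversely `s ↦ I⁻¹(I s / c)` is
an increasing bijection, hence continuous, and a measure on `[a,b)` that is finite on each `[a,s]`
is determined by its distribution function.
-/

section ContinuousBijections

variable {X Y : Type*} [LinearOrder Y] [TopologicalSpace Y] {f : X → Y}

theorem strictMonoOn_or_strictAntiOn_of_continuousOn_injOn [ConditionallyCompleteLinearOrder X]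
    [TopologicalSpace X] [OrderTopology X] [DenselyOrdered X] [OrderClosedTopology Y]
    {s : Set X} [s.OrdConnected] (hf : ContinuousOn f s) (hinj : InjOn f s) :
    StrictMonoOn f s ∨ StrictAntiOn f s := by
  rcases s.eq_empty_or_nonempty with rfl | ⟨x, hx⟩
  · exact .inl fun _ hx => hx.elim
  have : Inhabited s := ⟨x, hx⟩
  exact (hf.domRestrict.strictMono_of_inj hinj.injective).imp
    strictMonoOn_iff_strictMono.2 strictAntiOn_iff_strictAnti.2

theorem strictMonoOn_of_continuousOn_bijOn_Ico [ConditionallyCompleteLinearOrder X]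
    [TopologicalSpace X] [OrderTopology X] [DenselyOrdered X] [OrderClosedTopology Y]
    [DenselyOrdered Y] {a b : X} {c d : Y} (hf : ContinuousOn f (Ico a b))
    (hbij : BijOn f (Ico a b) (Ico c d)) : StrictMonoOn f (Ico a b) := by
  refine (strictMonoOn_or_strictAntiOn_of_continuousOn_injOn hf hbij.injOn).elim id
    fun hanti s hs => ?_
  have ha : a ∈ Ico a b := left_mem_Ico.2 (hs.1.trans_lt hs.2)
  obtain ⟨y, hay, hyd⟩ := exists_between (hbij.mapsTo ha).2
  obtain ⟨x, hx, rfl⟩ := hbij.surjOn ⟨(hbij.mapsTo ha).1.trans hay.le, hyd⟩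
  exact absurd (hanti.antitoneOn ha hx hx.1) hay.not_ge

theorem continuousOn_of_monotoneOn_of_surjOn [LinearOrder X] [TopologicalSpace X]
    [OrderTopology X] [OrderTopology Y] [DenselyOrdered Y] {s : Set X} {t : Set Y}
    [s.OrdConnected] [t.OrdConnected] (hmono : MonotoneOn f s) (hmaps : MapsTo f s t)
    (hsurj : SurjOn f s t) : ContinuousOn f s := by
  have hmono' : Monotone (hmaps.restrict f s t) := fun x y hxy => hmono x.2 y.2 hxy
  have hcont := hmono'.continuous_of_surjective (hmaps.restrict_surjective_iff.2 hsurj)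
  exact continuousOn_iff_continuous_domRestrict.2 (continuous_subtype_val.comp hcont)

end ContinuousBijections

section DistributionFunctions

variable {X : Type*} [LinearOrder X] [MeasurableSpace X] {μ ν : Measure X} {a b : X}

theorem measure_Iic_eq_zero_of_ae_mem_Ico (hν : ∀ᵐ x ∂ν, x ∈ Ico a b) {t : X} (ht : t < a) :
    ν (Iic t) = 0 :=
  measure_eq_zero_iff_ae_notMem.2 <| hν.mono fun _ hx hxt => (ht.trans_le hx.1).not_ge hxt

theorem map_apply_Iic_of_strictMonoOn {Y : Type*} [LinearOrder Y] [TopologicalSpace Y]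
    [OrderClosedTopology Y] [MeasurableSpace Y] [OpensMeasurableSpace Y] {f : X → Y} {S : Set X}
    (hν : ∀ᵐ x ∂ν, x ∈ S) (hf : AEMeasurable f ν) (hmono : StrictMonoOn f S) {s : X}
    (hs : s ∈ S) : ν.map f (Iic (f s)) = ν (Iic s) := by
  rw [Measure.map_apply_of_aemeasurable hf measurableSet_Iic]
  exact measure_congr <| hν.mono fun x hx => propext (hmono.le_iff_le hx hs)

theorem withDensity_ofReal_restrict_Ioo_apply_Iic [TopologicalSpace X] [OrderClosedTopology X]
    [OpensMeasurableSpace X] [NullSingletonClass μ] {lam : X → ℝ} {s : X}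
    (hs : s < b) (hnonneg : ∀ x ∈ Ioo a s, 0 ≤ lam x) (hint : IntegrableOn lam (Ioo a s) μ) :
    (μ.restrict (Ioo a b)).withDensity (fun x => ENNReal.ofReal (lam x)) (Iic s) =
      ENNReal.ofReal (∫ x in Ioo a s, lam x ∂μ) := by
  have hset : Iic s ∩ Ioo a b = Ioc a s := by
    ext x
    exact ⟨fun hx => ⟨hx.2.1, hx.1⟩, fun hx => ⟨hx.2, hx.1, hx.2.trans_lt hs⟩⟩
  have hae : 0 ≤ᵐ[μ.restrict (Ioo a s)] lam :=
    ae_restrict_of_forall_mem measurableSet_Ioo hnonneg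
  rw [withDensity_apply _ measurableSet_Iic, Measure.restrict_restrict measurableSet_Iic, hset,
    ← restrict_Ioo_eq_restrict_Ioc, ofReal_integral_eq_lintegral_ofReal hint hae]

variable [TopologicalSpace X] [OrderTopology X] [SecondCountableTopology X] [BorelSpace X]

theorem measure_ext_of_Iic_of_ae_lt [DenselyOrdered X] (hμ : ∀ᵐ x ∂μ, x < b)
    (hν : ∀ᵐ x ∂ν, x < b) (hfin : ∀ t < b, μ (Iic t) ≠ ⊤)
    (h : ∀ t < b, μ (Iic t) = ν (Iic t)) : μ = ν := by
  obtain ⟨D, hDc, hD⟩ := TopologicalSpace.exists_countable_dense X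
  have hcover : Iio b = ⋃ y ∈ D ∩ Iio b, Iic y := by
    refine Subset.antisymm (fun x hx => ?_)
      (iUnion₂_subset fun y hy => Iic_subset_Iio.2 hy.2)
    obtain ⟨y, hyD, hxy, hyb⟩ := hD.exists_between hx
    exact mem_biUnion ⟨hyD, hyb⟩ hxy.le
  rw [← Measure.restrict_eq_self_of_ae_mem (s := Iio b) hμ,
    ← Measure.restrict_eq_self_of_ae_mem (s := Iio b) hν, hcover,
    Measure.restrict_biUnion_congr (hDc.mono inter_subset_left)]
  intro y hy
  have : IsFiniteMeasure (μ.restrict (Iic y)) :=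
    isFiniteMeasure_restrict.2 (hfin y hy.2)
  refine Measure.ext_of_Iic _ _ fun t => ?_
  rw [Measure.restrict_apply measurableSet_Iic, Measure.restrict_apply measurableSet_Iic,
    Iic_inter_Iic]
  exact h _ (inf_le_right.trans_lt hy.2)

theorem measure_ext_of_Iic_of_ae_mem_Ico [DenselyOrdered X] (hμ : ∀ᵐ x ∂μ, x ∈ Ico a b)
    (hν : ∀ᵐ x ∂ν, x ∈ Ico a b) (hfin : ∀ t ∈ Ico a b, μ (Iic t) ≠ ⊤)
    (h : ∀ t ∈ Ico a b, μ (Iic t) = ν (Iic t)) : μ = ν := by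
  have hμ0 : ∀ t < a, μ (Iic t) = 0 := fun _ => measure_Iic_eq_zero_of_ae_mem_Ico hμ
  have hν0 : ∀ t < a, ν (Iic t) = 0 := fun _ => measure_Iic_eq_zero_of_ae_mem_Ico hν
  refine measure_ext_of_Iic_of_ae_lt (hμ.mono fun _ hx => hx.2) (hν.mono fun _ hx => hx.2)
    (fun t ht => ?_) fun t ht => ?_
  · rcases lt_or_ge t a with hta | hat
    · exact (hμ0 t hta).trans_ne ENNReal.zero_ne_top
    · exact hfin t ⟨hat, ht⟩
  · rcases lt_or_ge t a with hta | hat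
    · rw [hμ0 t hta, hν0 t hta]
    · exact h t ⟨hat, ht⟩

end DistributionFunctions

/-- `I` is the distribution function `s ↦ ν (-∞, s]` of a measure `ν` carried by `[a,b)`, and it is
a bijection of `[a,b)` onto `[0,∞)`. Nothing is asked of `I` outside `[a,b)`. -/
structure IsDistribFunOnIco {X : Type*} [Preorder X] [MeasurableSpace X] (ν : Measure X)
    (I : X → ℝ) (a b : X) : Prop where
  ae_mem : ∀ᵐ x ∂ν, x ∈ Ico a b
  measure_Iic : ∀ s ∈ Ico a b, ν (Iic s) = ENNReal.ofReal (I s)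
  bijOn : BijOn I (Ico a b) (Ici 0)

namespace IsDistribFunOnIco

section Order

variable {X : Type*} [LinearOrder X] [MeasurableSpace X] {ν : Measure X} {I : X → ℝ} {a b : X}
  {J : ℝ → X} {c : ℝ}

theorem strictMonoOn (hI : IsDistribFunOnIco ν I a b) : StrictMonoOn I (Ico a b) := by
  refine MonotoneOn.strictMonoOn_of_injOn (fun x hx y hy hxy => ?_) hI.bijOn.injOn
  rw [← ENNReal.ofReal_le_ofReal_iff (hI.bijOn.mapsTo hy), ← hI.measure_Iic x hx,
    ← hI.measure_Iic y hy]
  exact measure_mono (Iic_subset_Iic.2 hxy)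

theorem bijOn_leftInv (hI : IsDistribFunOnIco ν I a b) (hJ : LeftInvOn J I (Ico a b)) :
    BijOn J (Ici 0) (Ico a b) :=
  hI.bijOn.symm ⟨hI.bijOn.image_eq ▸ hJ.rightInvOn_image, hJ⟩

theorem apply_leftInv (hI : IsDistribFunOnIco ν I a b) (hJ : LeftInvOn J I (Ico a b)) {t : ℝ}
    (ht : 0 ≤ t) : I (J t) = t := by
  obtain ⟨s, hs, rfl⟩ := hI.bijOn.surjOn ht
  rw [hJ hs]

theorem bijOn_rescale (hI : IsDistribFunOnIco ν I a b) (hJ : LeftInvOn J I (Ico a b))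
    (hc : 0 < c) : BijOn (fun s => J (I s / c)) (Ico a b) (Ico a b) := by
  have hdiv : BijOn (fun t : ℝ => t / c) (Ici 0) (Ici 0) :=
    ⟨fun _ ht => div_nonneg ht hc.le, fun _ _ _ _ => (div_left_inj' hc.ne').1,
      fun t ht => ⟨t * c, mul_nonneg ht hc.le, mul_div_cancel_right₀ t hc.ne'⟩⟩
  exact (hI.bijOn_leftInv hJ).comp (hdiv.comp hI.bijOn)

theorem strictMonoOn_rescale (hI : IsDistribFunOnIco ν I a b) (hJ : LeftInvOn J I (Ico a b))
    (hc : 0 < c) : StrictMonoOn (fun s => J (I s / c)) (Ico a b) := by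
  have hmaps := (hI.bijOn_rescale hJ hc).mapsTo
  intro x hx y hy hxy
  rw [← hI.strictMonoOn.lt_iff_lt (hmaps hx) (hmaps hy),
    hI.apply_leftInv hJ (div_nonneg (hI.bijOn.mapsTo hx) hc.le),
    hI.apply_leftInv hJ (div_nonneg (hI.bijOn.mapsTo hy) hc.le)]
  exact div_lt_div_of_pos_right (hI.strictMonoOn hx hy hxy) hc

theorem continuousOn_rescale [TopologicalSpace X] [OrderTopology X] [DenselyOrdered X]
    (hI : IsDistribFunOnIco ν I a b) (hJ : LeftInvOn J I (Ico a b)) (hc : 0 < c) :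
    ContinuousOn (fun s => J (I s / c)) (Ico a b) :=
  have hbij := hI.bijOn_rescale hJ hc
  continuousOn_of_monotoneOn_of_surjOn (hI.strictMonoOn_rescale hJ hc).monotoneOn hbij.mapsTo
    hbij.surjOn

theorem of_withDensity [TopologicalSpace X] [OrderClosedTopology X] [OpensMeasurableSpace X]
    {μ : Measure X} [NullSingletonClass μ] {lam : X → ℝ} (hnonneg : ∀ x ∈ Ioo a b, 0 ≤ lam x)
    (hint : ∀ s ∈ Ico a b, IntegrableOn lam (Ioo a s) μ)
    (hI : ∀ s ∈ Ico a b, I s = ∫ x in Ioo a s, lam x ∂μ)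
    (hinj : InjOn I (Ico a b)) (hsurj : SurjOn I (Ico a b) (Ici 0)) :
    IsDistribFunOnIco ((μ.restrict (Ioo a b)).withDensity fun x => ENNReal.ofReal (lam x))
      I a b := by
  have hnonneg' : ∀ s ∈ Ico a b, ∀ x ∈ Ioo a s, 0 ≤ lam x :=
    fun s hs x hx => hnonneg x ⟨hx.1, hx.2.trans hs.2⟩
  refine ⟨?_, fun s hs => ?_, fun s hs => ?_, hinj, hsurj⟩
  · exact (withDensity_absolutelyContinuous _ _).ae_le <|
      ae_restrict_of_forall_mem measurableSet_Ioo fun _ hx => Ioo_subset_Ico_self hx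
  · rw [withDensity_ofReal_restrict_Ioo_apply_Iic hs.2 (hnonneg' s hs) (hint s hs), hI s hs]
  · rw [hI s hs]
    exact setIntegral_nonneg measurableSet_Ioo (hnonneg' s hs)

end Order

section Pushforward

variable {X : Type*} [TopologicalSpace X] [MeasurableSpace X] [BorelSpace X]
  [SecondCountableTopology X] {ν : Measure X} {I : X → ℝ} {a b : X} {J : ℝ → X} {c : ℝ} {f : X → X}

theorem map_eq_smul_iff_mul_eq [LinearOrder X] [OrderTopology X] [DenselyOrdered X]
    (hI : IsDistribFunOnIco ν I a b) (hc : 0 ≤ c) (hf : AEMeasurable f ν)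
    (hmono : StrictMonoOn f (Ico a b)) (hmaps : MapsTo f (Ico a b) (Ico a b))
    (hsurj : SurjOn f (Ico a b) (Ico a b)) :
    ν.map f = ENNReal.ofReal c • ν ↔ ∀ s ∈ Ico a b, c * I (f s) = I s := by
  have hmap : ∀ s ∈ Ico a b, ν.map f (Iic (f s)) = ENNReal.ofReal (I s) := fun s hs => by
    rw [map_apply_Iic_of_strictMonoOn hI.ae_mem hf hmono hs, hI.measure_Iic s hs]
  have hsmul : ∀ t ∈ Ico a b, (ENNReal.ofReal c • ν) (Iic t) = ENNReal.ofReal (c * I t) :=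
    fun t ht => by
      rw [Measure.smul_apply, hI.measure_Iic t ht, smul_eq_mul, ENNReal.ofReal_mul hc]
  constructor
  · intro h s hs
    have hfs := hmaps hs
    rw [← ENNReal.ofReal_eq_ofReal_iff (mul_nonneg hc (hI.bijOn.mapsTo hfs))
      (hI.bijOn.mapsTo hs), ← hsmul _ hfs, ← hmap s hs, h]
  · intro h
    refine measure_ext_of_Iic_of_ae_mem_Ico (a := a) (b := b) ?_
      (Measure.ae_smul_measure hI.ae_mem _) ?_ ?_
    · exact (ae_map_iff hf measurableSet_Ico).2 (hI.ae_mem.mono hmaps)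
    all_goals
      intro t ht
      obtain ⟨s, hs, rfl⟩ := hsurj ht
    · exact hmap s hs ▸ ENNReal.ofReal_ne_top
    · rw [hmap s hs, hsmul _ ht, h s hs]

theorem map_eq_smul_iff_eqOn [ConditionallyCompleteLinearOrder X] [OrderTopology X]
    [DenselyOrdered X] (hI : IsDistribFunOnIco ν I a b) (hJ : LeftInvOn J I (Ico a b))
    (hc : 0 < c) (hf : ContinuousOn f (Ico a b)) (hbij : BijOn f (Ico a b) (Ico a b)) :
    ν.map f = ENNReal.ofReal c • ν ↔ EqOn f (fun s => J (I s / c)) (Ico a b) := by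
  have hfν : AEMeasurable f ν :=
    Measure.restrict_eq_self_of_ae_mem hI.ae_mem ▸ hf.aemeasurable measurableSet_Ico
  have hmono := strictMonoOn_of_continuousOn_bijOn_Ico hf hbij
  rw [hI.map_eq_smul_iff_mul_eq hc.le hfν hmono hbij.mapsTo hbij.surjOn]
  refine forall₂_congr fun s hs => ⟨fun h => ?_, fun h => ?_⟩
  · beta_reduce
    rw [← h, mul_div_cancel_left₀ _ hc.ne', hJ (hbij.mapsTo hs)]
  · rw [h, hI.apply_leftInv hJ (div_nonneg (hI.bijOn.mapsTo hs) hc.le), mul_div_cancel₀ _ hc.ne']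

end Pushforward

end IsDistribFunOnIco

theorem quasi_preservation_fixes_growing_family_general {X : Type*}
    [ConditionallyCompleteLinearOrder X] [DenselyOrdered X] [TopologicalSpace X] [OrderTopology X]
    [SecondCountableTopology X] [MeasurableSpace X] [BorelSpace X] {ν : Measure X} {I : X → ℝ}
    {a b : X} (hI : IsDistribFunOnIco ν I a b) {J : ℝ → X} (hJ : LeftInvOn J I (Ico a b)) {c : ℝ}
    (hc : 0 < c) :
    (∃ f : X → X, Measurable f ∧ ContinuousOn f (Ico a b) ∧ BijOn f (Ico a b) (Ico a b) ∧
      ν.map f = ENNReal.ofReal c • ν ∧ EqOn f (fun s => J (I s / c)) (Ico a b)) ∧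
    ∀ f : X → X, ContinuousOn f (Ico a b) → BijOn f (Ico a b) (Ico a b) →
      ν.map f = ENNReal.ofReal c • ν → EqOn f (fun s => J (I s / c)) (Ico a b) := by
  classical
  refine ⟨?_, fun f hf hbij => (hI.map_eq_smul_iff_eqOn hJ hc hf hbij).1⟩
  set F : X → X := fun s => J (I s / c)
  have hFcont : ContinuousOn F (Ico a b) := hI.continuousOn_rescale hJ hc
  -- `I` and `J` are arbitrary off `[a,b)` and `[0,∞)`, so `F` itself may fail to be measurable.
  let f : X → X := (Ico a b).piecewise F fun _ => a
  have hfF : EqOn f F (Ico a b) := piecewise_eqOn _ _ _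
  have hfcont : ContinuousOn f (Ico a b) := hFcont.congr hfF
  have hfbij : BijOn f (Ico a b) (Ico a b) := (hI.bijOn_rescale hJ hc).congr hfF.symm
  exact ⟨f, hFcont.measurable_piecewise continuousOn_const measurableSet_Ico, hfcont, hfbij,
    (hI.map_eq_smul_iff_eqOn hJ hc hfcont hfbij).2 hfF, hfF⟩

/-- **Quasi-preservation fixes the growing family (binary conservative case).**
Let `lam` be a positive continuous density on `(0,1)` with `I(s) := ∫₀^s lam` finite for
`s < 1` and `I(s) → ∞` as `s → 1⁻`, let `J` be the inverse bijection of `I : [0,1) → [0,∞)`,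
and let `ν` be the measure with density `lam` on `(0,1)`.  If `c > 0` and `f` is a
continuous bijection of `[0,1)` with `f_♯ν = c·ν`, then `f(s) = I⁻¹(I(s)/c)` on `[0,1)`.
In particular, for every `α > 0` and `t ∈ ℝ` there is exactly one continuous bijection
`f_t` of `[0,1)` with `(f_t)_♯ν = e^{αt}·ν`, namely `f_t(s) = I⁻¹(e^{−αt}·I(s))`. -/
theorem quasi_preservation_fixes_growing_family
    (lam : ℝ → ℝ)
    (hcont : ContinuousOn lam (Ioo 0 1))
    (hpos : ∀ s ∈ Ioo (0:ℝ) 1, 0 < lam s)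
    (hint : ∀ s ∈ Ico (0:ℝ) 1, IntegrableOn lam (Ioo 0 s))
    (I : ℝ → ℝ) (hIdef : ∀ s, I s = ∫ u in Ioo (0:ℝ) s, lam u)
    (htop : Tendsto I (nhdsWithin 1 (Iio 1)) atTop)
    (J : ℝ → ℝ)
    (hJI : ∀ s ∈ Ico (0:ℝ) 1, J (I s) = s)
    (hIJ : ∀ t : ℝ, 0 ≤ t → I (J t) = t ∧ J t ∈ Ico (0:ℝ) 1)
    (ν : Measure ℝ)
    (hν : ν = (volume.restrict (Ioo 0 1)).withDensity fun s => ENNReal.ofReal (lam s)) :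
    (∀ c > (0:ℝ), ∀ f : ℝ → ℝ, Measurable f → ContinuousOn f (Ico 0 1) →
      BijOn f (Ico 0 1) (Ico 0 1) →
      Measure.map f ν = ENNReal.ofReal c • ν →
      ∀ s ∈ Ico (0:ℝ) 1, f s = J (I s / c)) ∧
    (∀ α > (0:ℝ), ∀ t : ℝ,
      (∃ f : ℝ → ℝ, Measurable f ∧ ContinuousOn f (Ico 0 1) ∧
        BijOn f (Ico 0 1) (Ico 0 1) ∧
        Measure.map f ν = ENNReal.ofReal (Real.exp (α * t)) • ν ∧
        ∀ s ∈ Ico (0:ℝ) 1, f s = J (Real.exp (-(α * t)) * I s)) ∧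
      (∀ g : ℝ → ℝ, Measurable g → ContinuousOn g (Ico 0 1) →
        BijOn g (Ico 0 1) (Ico 0 1) →
        Measure.map g ν = ENNReal.ofReal (Real.exp (α * t)) • ν →
        ∀ s ∈ Ico (0:ℝ) 1, g s = J (Real.exp (-(α * t)) * I s))) := by
  subst hν
  have hI : IsDistribFunOnIco _ I 0 1 :=
    .of_withDensity (fun s hs => (hpos s hs).le) hint (fun s _ => hIdef s)
      (LeftInvOn.injOn hJI) fun t ht => ⟨J t, (hIJ t ht).2, (hIJ t ht).1⟩
  have hmain {c : ℝ} (hc : 0 < c) := quasi_preservation_fixes_growing_family_general hI hJI hc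
  simp only [Real.exp_neg, inv_mul_eq_div]
  exact ⟨fun c hc f _ => (hmain hc).2 f,
    fun _ _ _ => ⟨(hmain (Real.exp_pos _)).1, fun g _ => (hmain (Real.exp_pos _)).2 g⟩⟩
end

section
/- Let α > 0 and for t ≥ 0 and s ∈ [0,1) define f_t(s) := I⁻¹(e^{−αt}·I(s)). Then the following are equivalent: (i) for every s ∈ [0,1), both maps t ↦ e^{−t}·f_t(s) and t ↦ e^{−t}·(1 − f_t(s)) are nonincreasing on [0, ∞); (ii) α·I(s) ≤ (1 − s)·λ(s) for every s ∈ (0,1). (Condition (ii) says that the generator v(s) = −α·I(s)/λ(s) satisfies v(s) ≥ s − 1 for all s.) -/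
open MeasureTheory Set Filter

/-! Along a trajectory `u = f_t(s)` one has `I u = e^{−αt} I s`, so time can be eliminated:
`(e^{−t} (1 − f_t(s)))^α · I s = I u · (1 − u)^α`. As `t ↦ f_t(s)` is decreasing and each
trajectory started at `s` passes through every point of `(0, s]`, the second map is nonincreasing
for all `s` exactly when `u ↦ I u · (1 − u)^α` is nondecreasing on `(0, 1)`, and the sign of the
derivative of that function is the sign of `(1 − u) I'(u) − α I u`. The inverse of `I` never has to
be differentiated. The first map is always a product of nonnegative nonincreasing functions.
-/

theorem strictMonoOn_setIntegral_Ioo {f : ℝ → ℝ} {a b : ℝ}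
    (hint : ∀ s ∈ Ico a b, IntegrableOn f (Ioo a s)) (hpos : ∀ s ∈ Ioo a b, 0 < f s) :
    StrictMonoOn (fun s => ∫ u in Ioo a s, f u) (Ico a b) := by
  intro s hs t ht hst
  have hInt {x : ℝ} (hx : x ∈ Ico a b) : IntervalIntegrable f volume a x :=
    (intervalIntegrable_iff_integrableOn_Ioo_of_le hx.1).2 (hint x hx)
  have hgap : 0 < ∫ u in s..t, f u :=
    intervalIntegral.intervalIntegral_pos_of_pos_on ((hInt hs).symm.trans (hInt ht))
      (fun u hu => hpos u ⟨hs.1.trans_lt hu.1, hu.2.trans ht.2⟩) hst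
  simpa only [← intervalIntegral.integral_interval_sub_left (hInt ht) (hInt hs), sub_pos,
    intervalIntegral.integral_of_le hs.1, intervalIntegral.integral_of_le ht.1,
    integral_Ioc_eq_integral_Ioo] using hgap

theorem hasDerivAt_setIntegral_Ioo {E : Type*} [NormedAddCommGroup E] [NormedSpace ℝ E]
    [CompleteSpace E] {f : ℝ → E} {a b s : ℝ} (hf : ContinuousOn f (Ioo a b))
    (hs : s ∈ Ioo a b) (hint : IntegrableOn f (Ioo a s)) :
    HasDerivAt (fun s => ∫ u in Ioo a s, f u) (f s) s := by
  have hderiv : HasDerivAt (fun x => ∫ u in a..x, f u) (f s) s :=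
    intervalIntegral.integral_hasDerivAt_right
      ((intervalIntegrable_iff_integrableOn_Ioo_of_le hs.1.le).2 hint)
      (hf.stronglyMeasurableAtFilter isOpen_Ioo s hs) (hf.continuousAt (isOpen_Ioo.mem_nhds hs))
  refine hderiv.congr_of_eventuallyEq ?_
  filter_upwards [isOpen_Ioo.mem_nhds hs] with x hx
  rw [intervalIntegral.integral_of_le hx.1.le, integral_Ioc_eq_integral_Ioo]

theorem monotoneOn_iff_nonneg_of_hasDerivAt {D : Set ℝ} {f f' : ℝ → ℝ} (hD : Convex ℝ D)
    (hDo : IsOpen D) (hf : ∀ x ∈ D, HasDerivAt f (f' x) x) :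
    MonotoneOn f D ↔ ∀ x ∈ D, 0 ≤ f' x := by
  refine ⟨fun hmono x hx => ?_, fun hnonneg => ?_⟩
  · rw [← (hf x hx).deriv, ← derivWithin_of_isOpen hDo hx]
    exact hmono.derivWithin_nonneg
  · have hcont : ContinuousOn f D := fun x hx => (hf x hx).continuousAt.continuousWithinAt
    refine monotoneOn_of_hasDerivWithinAt_nonneg hD hcont (f' := f') ?_ ?_ <;>
      rw [hDo.interior_eq]
    exacts [fun x hx => (hf x hx).hasDerivWithinAt, hnonneg]

theorem hasDerivAt_mul_sub_rpow {F : ℝ → ℝ} {F' b s : ℝ} (α : ℝ) (hF : HasDerivAt F F' s)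
    (hs : s < b) :
    HasDerivAt (fun u => F u * (b - u) ^ α) ((b - s) ^ (α - 1) * ((b - s) * F' - α * F s)) s := by
  have hbs : b - s ≠ 0 := (sub_pos.2 hs).ne'
  refine (hF.mul (((hasDerivAt_id s).const_sub b).rpow_const (.inl hbs))).congr_deriv ?_
  simp only [id, Real.rpow_sub_one hbs]
  field_simp
  ring

theorem monotoneOn_mul_sub_rpow_iff {F F' : ℝ → ℝ} {a b : ℝ} (α : ℝ)
    (hF : ∀ s ∈ Ioo a b, HasDerivAt F (F' s) s) :
    MonotoneOn (fun s => F s * (b - s) ^ α) (Ioo a b) ↔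
      ∀ s ∈ Ioo a b, α * F s ≤ (b - s) * F' s := by
  rw [monotoneOn_iff_nonneg_of_hasDerivAt (convex_Ioo a b) isOpen_Ioo
    fun s hs => hasDerivAt_mul_sub_rpow α (hF s hs) hs.2]
  refine forall₂_congr fun s hs => ?_
  rw [mul_nonneg_iff_of_pos_left (Real.rpow_pos_of_pos (sub_pos.2 hs.2) _), sub_nonneg]

theorem antitone_exp_neg_mul {g : ℝ → ℝ} (hg : Antitone g) (hg0 : ∀ t, 0 ≤ g t) :
    Antitone fun t => Real.exp (-t) * g t := fun _ _ htu =>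
  mul_le_mul (Real.exp_le_exp.2 (neg_le_neg htu)) (hg htu) (hg0 _) (Real.exp_pos _).le

/-- The flow `f_t(s) = I⁻¹(e^{−αt} · I s)`. The inverse is passed as a total function `J`
whose values on `(−∞, 0)` are irrelevant. -/
noncomputable def splittingFlow (I J : ℝ → ℝ) (α t s : ℝ) : ℝ :=
  J (Real.exp (-(α * t)) * I s)

section splittingFlow

variable {I J : ℝ → ℝ} {α t s : ℝ}

theorem splittingFlow_zero (hs : J (I s) = s) : splittingFlow I J α 0 s = s := by
  simp [splittingFlow, hs]

theorem apply_splittingFlow (hIJ : RightInvOn J I (Ici 0)) (hs : 0 ≤ I s) :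
    I (splittingFlow I J α t s) = Real.exp (-(α * t)) * I s :=
  hIJ (mul_nonneg (Real.exp_pos _).le hs)

theorem splittingFlow_mem_Ico (hJ : MapsTo J (Ici 0) (Ico 0 1)) (hs : 0 ≤ I s) :
    splittingFlow I J α t s ∈ Ico 0 1 :=
  hJ (mul_nonneg (Real.exp_pos _).le hs)

theorem splittingFlow_mem_Ioo (hI0 : I 0 = 0) (hIJ : RightInvOn J I (Ici 0))
    (hJ : MapsTo J (Ici 0) (Ico 0 1)) (hs : 0 < I s) : splittingFlow I J α t s ∈ Ioo 0 1 := by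
  obtain ⟨hnonneg, hlt⟩ := splittingFlow_mem_Ico (α := α) (t := t) hJ hs.le
  refine ⟨hnonneg.lt_of_ne fun hzero => ?_, hlt⟩
  have hpos : 0 < I (splittingFlow I J α t s) := by
    rw [apply_splittingFlow hIJ hs.le]
    positivity
  rw [← hzero, hI0] at hpos
  exact hpos.false

theorem antitone_splittingFlow (hα : 0 ≤ α) (hJ : MonotoneOn J (Ici 0)) (hs : 0 ≤ I s) :
    Antitone fun t => splittingFlow I J α t s := by
  intro t u htu
  refine hJ (mul_nonneg (Real.exp_pos _).le hs) (mul_nonneg (Real.exp_pos _).le hs) ?_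
  gcongr

theorem exists_splittingFlow_eq {u v : ℝ} (hα : 0 < α) (hu : J (I u) = u) (hpos : 0 < I u)
    (hle : I u ≤ I v) : ∃ t, 0 ≤ t ∧ splittingFlow I J α t v = u := by
  have hv : 0 < I v := hpos.trans_le hle
  refine ⟨Real.log (I v / I u) / α,
    div_nonneg (Real.log_nonneg ((one_le_div hpos).2 hle)) hα.le, ?_⟩
  rw [splittingFlow, mul_div_cancel₀ _ hα.ne', Real.exp_neg, Real.exp_log (div_pos hv hpos),
    inv_div, div_mul_cancel₀ _ hv.ne', hu]

theorem exp_neg_mul_one_sub_splittingFlow_rpow_mul (hIJ : RightInvOn J I (Ici 0))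
    (hJ : MapsTo J (Ici 0) (Ico 0 1)) (hs : 0 ≤ I s) :
    (Real.exp (-t) * (1 - splittingFlow I J α t s)) ^ α * I s =
      I (splittingFlow I J α t s) * (1 - splittingFlow I J α t s) ^ α := by
  have hflow : 0 ≤ 1 - splittingFlow I J α t s :=
    sub_nonneg.2 (splittingFlow_mem_Ico hJ hs).2.le
  rw [Real.mul_rpow (Real.exp_pos _).le hflow, ← Real.exp_mul, apply_splittingFlow hIJ hs,
    neg_mul, mul_comm t α]
  ring

theorem exp_neg_mul_one_sub_splittingFlow_le_iff (hα : 0 < α) (hIJ : RightInvOn J I (Ici 0))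
    (hJ : MapsTo J (Ici 0) (Ico 0 1)) (hs : 0 < I s) (t u : ℝ) :
    Real.exp (-u) * (1 - splittingFlow I J α u s) ≤
        Real.exp (-t) * (1 - splittingFlow I J α t s) ↔
      I (splittingFlow I J α u s) * (1 - splittingFlow I J α u s) ^ α ≤
        I (splittingFlow I J α t s) * (1 - splittingFlow I J α t s) ^ α := by
  have hnonneg (r : ℝ) : 0 ≤ Real.exp (-r) * (1 - splittingFlow I J α r s) :=
    mul_nonneg (Real.exp_pos _).le (sub_nonneg.2 (splittingFlow_mem_Ico hJ hs.le).2.le)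
  rw [← exp_neg_mul_one_sub_splittingFlow_rpow_mul hIJ hJ hs.le,
    ← exp_neg_mul_one_sub_splittingFlow_rpow_mul hIJ hJ hs.le, mul_le_mul_iff_left₀ hs,
    Real.rpow_le_rpow_iff (hnonneg u) (hnonneg t) hα]

theorem antitone_exp_neg_mul_one_sub_splittingFlow (hα : 0 < α) (hI0 : I 0 = 0)
    (hIJ : RightInvOn J I (Ici 0)) (hJ : MapsTo J (Ici 0) (Ico 0 1)) (hJmono : MonotoneOn J (Ici 0))
    (hmono : MonotoneOn (fun u => I u * (1 - u) ^ α) (Ioo 0 1)) (hs : 0 < I s) :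
    Antitone fun t => Real.exp (-t) * (1 - splittingFlow I J α t s) := fun t u htu =>
  (exp_neg_mul_one_sub_splittingFlow_le_iff hα hIJ hJ hs t u).2 <|
    hmono (splittingFlow_mem_Ioo hI0 hIJ hJ hs) (splittingFlow_mem_Ioo hI0 hIJ hJ hs)
      (antitone_splittingFlow hα.le hJmono hs.le htu)

theorem forall_antitoneOn_exp_neg_mul_one_sub_splittingFlow_iff (hα : 0 < α) (hI0 : I 0 = 0)
    (hI : StrictMonoOn I (Ico 0 1)) (hJI : LeftInvOn J I (Ico 0 1))
    (hIJ : RightInvOn J I (Ici 0)) (hJ : MapsTo J (Ici 0) (Ico 0 1)) :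
    (∀ s ∈ Ico (0 : ℝ) 1,
        AntitoneOn (fun t => Real.exp (-t) * (1 - splittingFlow I J α t s)) (Ici 0)) ↔
      MonotoneOn (fun u => I u * (1 - u) ^ α) (Ioo 0 1) := by
  have hzero : (0 : ℝ) ∈ Ico 0 1 := ⟨le_rfl, one_pos⟩
  have hIpos {s : ℝ} (hs : s ∈ Ioo 0 1) : 0 < I s := hI0 ▸ hI hzero (Ioo_subset_Ico_self hs) hs.1
  refine ⟨fun hanti u hu v hv huv => ?_, fun hmono s hs => ?_⟩
  · have hu' := Ioo_subset_Ico_self hu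
    have hv' := Ioo_subset_Ico_self hv
    obtain ⟨t, ht, hflow⟩ : ∃ t, 0 ≤ t ∧ splittingFlow I J α t v = u :=
      exists_splittingFlow_eq hα (hJI hu') (hIpos hu) (hI.monotoneOn hu' hv' huv)
    have hle := (exp_neg_mul_one_sub_splittingFlow_le_iff hα hIJ hJ (hIpos hv) 0 t).1
      (hanti v hv' self_mem_Ici ht ht)
    rwa [hflow, splittingFlow_zero (hJI hv')] at hle
  · rcases hs.1.eq_or_lt with rfl | hspos
    · have hfixed (t : ℝ) : splittingFlow I J α t 0 = 0 := by
        simpa [splittingFlow, hI0] using hJI hzero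
      simpa only [hfixed, sub_zero] using
        (antitone_exp_neg_mul antitone_const fun _ => zero_le_one).antitoneOn (Ici 0)
    · exact (antitone_exp_neg_mul_one_sub_splittingFlow hα hI0 hIJ hJ
        (Function.monotoneOn_of_rightInvOn_of_mapsTo hI.monotoneOn hIJ hJ) hmono
        (hIpos ⟨hspos, hs.2⟩)).antitoneOn _

end splittingFlow

theorem monotonicity_iff_generator_bound_general {I J lam : ℝ → ℝ} {α : ℝ} (hα : 0 < α)
    (hI0 : I 0 = 0) (hI : StrictMonoOn I (Ico 0 1))
    (hderiv : ∀ s ∈ Ioo (0 : ℝ) 1, HasDerivAt I (lam s) s) (hJI : LeftInvOn J I (Ico 0 1))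
    (hIJ : RightInvOn J I (Ici 0)) (hJ : MapsTo J (Ici 0) (Ico 0 1)) :
    (∀ s ∈ Ico (0 : ℝ) 1,
        AntitoneOn (fun t => Real.exp (-t) * splittingFlow I J α t s) (Ici 0) ∧
        AntitoneOn (fun t => Real.exp (-t) * (1 - splittingFlow I J α t s)) (Ici 0)) ↔
      ∀ s ∈ Ioo (0 : ℝ) 1, α * I s ≤ (1 - s) * lam s := by
  have hInonneg {s : ℝ} (hs : s ∈ Ico 0 1) : 0 ≤ I s :=
    hI0 ▸ hI.monotoneOn ⟨le_rfl, one_pos⟩ hs hs.1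
  have hJmono : MonotoneOn J (Ici 0) :=
    Function.monotoneOn_of_rightInvOn_of_mapsTo hI.monotoneOn hIJ hJ
  rw [← monotoneOn_mul_sub_rpow_iff α hderiv,
    ← forall_antitoneOn_exp_neg_mul_one_sub_splittingFlow_iff hα hI0 hI hJI hIJ hJ]
  refine forall₂_congr fun s hs => and_iff_right ?_
  exact (antitone_exp_neg_mul (antitone_splittingFlow hα.le hJmono (hInonneg hs))
    fun _ => (splittingFlow_mem_Ico hJ (hInonneg hs)).1).antitoneOn _

/-- **Monotonicity via the generator (binary conservative case).**
Let `lam` be a positive continuous density on `(0,1)` with `I(s) := ∫₀^s lam` finite for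
`s < 1` and `I(s) → ∞` as `s → 1⁻`, and let `J` be the inverse bijection of
`I : [0,1) → [0,∞)`.  For `α > 0` set `f_t(s) := I⁻¹(e^{−αt}·I(s))`.  Then the maps
`t ↦ e^{−t}·f_t(s)` and `t ↦ e^{−t}·(1 − f_t(s))` are nonincreasing on `[0,∞)` for every
`s ∈ [0,1)` if and only if `α·I(s) ≤ (1 − s)·lam(s)` for every `s ∈ (0,1)`
(i.e. the generator `v = −α·I/lam` satisfies `v(s) ≥ s − 1`). -/
theorem monotonicity_iff_generator_bound
    (lam : ℝ → ℝ)
    (hcont : ContinuousOn lam (Ioo 0 1))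
    (hpos : ∀ s ∈ Ioo (0:ℝ) 1, 0 < lam s)
    (hint : ∀ s ∈ Ico (0:ℝ) 1, IntegrableOn lam (Ioo 0 s))
    (I : ℝ → ℝ) (hIdef : ∀ s, I s = ∫ u in Ioo (0:ℝ) s, lam u)
    (htop : Tendsto I (nhdsWithin 1 (Iio 1)) atTop)
    (J : ℝ → ℝ)
    (hJI : ∀ s ∈ Ico (0:ℝ) 1, J (I s) = s)
    (hIJ : ∀ t : ℝ, 0 ≤ t → I (J t) = t ∧ J t ∈ Ico (0:ℝ) 1)
    (α : ℝ) (hα : 0 < α) :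
    ((∀ s ∈ Ico (0:ℝ) 1,
        AntitoneOn (fun t : ℝ => Real.exp (-t) * J (Real.exp (-(α * t)) * I s)) (Ici 0) ∧
        AntitoneOn (fun t : ℝ => Real.exp (-t) * (1 - J (Real.exp (-(α * t)) * I s))) (Ici 0))
      ↔ (∀ s ∈ Ioo (0:ℝ) 1, α * I s ≤ (1 - s) * lam s)) := by
  obtain rfl : I = fun s => ∫ u in Ioo 0 s, lam u := funext hIdef
  exact monotonicity_iff_generator_bound_general hα (by simp)
    (strictMonoOn_setIntegral_Ioo hint hpos)
    (fun s hs => hasDerivAt_setIntegral_Ioo hcont hs (hint s (Ioo_subset_Ico_self hs)))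
    hJI (fun t ht => (hIJ t ht).1) fun t ht => (hIJ t ht).2
end

section
/- Assume in addition that ∫₀¹ (1 − s)²·λ(s) ds < ∞. Let α > 0 and for x > 0 and s ∈ [0,1) define f^{(x)}(s) := I⁻¹(x^α·I(s)). Then the following are equivalent: (i) for every compact set K ⊂ (0, ∞) there exists a constant C_K > 0 such that for all x, x' ∈ K, ∫₀¹ (x·(f^{(x)}(s) − 1) − x'·(f^{(x')}(s) − 1))²·λ(s) ds ≤ C_K·(x − x')²; (ii) ∫₀¹ (I(s)/λ(s))²·λ(s) ds < ∞, i.e. the generator v(s) = −α·I(s)/λ(s) belongs to L²(ν). -/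
open MeasureTheory Set Filter
open scoped ENNReal NNReal Topology

/-! The substitution `t = I s` turns `ν` into Lebesgue measure on `(0, ∞)` and the family into
`x · g(x ^ α t)`, where `g = I⁻¹ - 1 ∈ L^p`. Its derivative in `x` is `k(x ^ α t)`, where
`k(t) = g(t) + α t g'(t)`; since `g ∈ L^p`, the generator `I / λ`, which becomes `t g'(t)`, is in
`L^p` exactly when `k` is. If `k ∈ L^p`, the norm of `k(x ^ α ·)` is a power of `x` times that of
`k`, so bounded for `x` in a compact set, and integrating in `x` (Hölder, Tonelli) gives the
Lipschitz estimate. Conversely, Fatou's lemma on the difference quotients at `x = 1` bounds the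
norm of `k` by the Lipschitz constant. -/

section LpCalculus

variable {X E : Type*} [MeasurableSpace X] {μ : Measure X} [NormedAddCommGroup E] [NormedSpace ℝ E]

theorem eLpNorm_deriv_le_of_eLpNorm_sub_le {φ : ℝ → X → E} {φ' : X → E} {x : ℝ} {p C : ℝ≥0∞}
    (hmeas : ∀ y ∈ Ici x, AEStronglyMeasurable (φ y) μ)
    (hφ : ∀ᵐ t ∂μ, HasDerivAt (φ · t) (φ' t) x)
    (hC : ∀ᶠ y in 𝓝[>] x, eLpNorm (φ y - φ x) p μ ≤ C * edist y x) :
    eLpNorm φ' p μ ≤ C := by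
  obtain ⟨y, -, hxy, hy⟩ := exists_seq_strictAnti_tendsto x
  have hy_gt : Tendsto y atTop (𝓝[>] x) :=
    tendsto_nhdsWithin_iff.2 ⟨hy, Eventually.of_forall hxy⟩
  refine Lp.eLpNorm_le_of_ae_tendsto (u := atTop)
    (f := fun n ↦ (y n - x)⁻¹ • (φ (y n) - φ x)) ?_
    (fun n ↦ ((hmeas _ (hxy n).le).sub (hmeas _ self_mem_Ici)).const_smul _) ?_
  · filter_upwards [hy_gt.eventually hC] with n hn
    rw [eLpNorm_const_smul, enorm_inv (sub_ne_zero.2 (hxy n).ne'), ← edist_eq_enorm_sub,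
      ← ENNReal.div_eq_inv_mul]
    exact ENNReal.div_le_of_le_mul hn
  · filter_upwards [hφ] with t ht
    refine ((hasDerivAt_iff_tendsto_slope.1 ht).comp
      (hy_gt.mono_right (nhdsWithin_mono _ fun _ h ↦ ne_of_gt h))).congr fun n ↦ ?_
    simp [slope_def_module]

variable [CompleteSpace E]

lemma enorm_sub_rpow_le_lintegral_deriv {f f' : ℝ → E} {a b p : ℝ} (hab : a ≤ b) (hp : 1 ≤ p)
    (hf : ∀ y ∈ Icc a b, HasDerivAt f (f' y) y) (hf' : ContinuousOn f' (Icc a b)) :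
    ‖f b - f a‖ₑ ^ p ≤ .ofReal (b - a) ^ (p - 1) * ∫⁻ y in Ioc a b, ‖f' y‖ₑ ^ p := by
  have hp_pos : 0 < p := one_pos.trans_le hp
  have hf'_meas : AEStronglyMeasurable f' (volume.restrict (Ioc a b)) :=
    (hf'.mono Ioc_subset_Icc_self).aestronglyMeasurable measurableSet_Ioc
  rw [← uIcc_of_le hab] at hf hf'
  have ftc : ∫ y in Ioc a b, f' y = f b - f a := by
    rw [← intervalIntegral.integral_of_le hab,
      intervalIntegral.integral_eq_sub_of_hasDerivAt hf hf'.intervalIntegrable]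
  have holder : ‖f b - f a‖ₑ ≤
      eLpNorm' f' p (volume.restrict (Ioc a b)) * .ofReal (b - a) ^ (1 - 1 / p) := by
    calc ‖f b - f a‖ₑ ≤ eLpNorm' f' 1 (volume.restrict (Ioc a b)) := by
          simpa [← ftc, eLpNorm'] using enorm_integral_le_lintegral_enorm f'
      _ ≤ _ := by
          simpa using eLpNorm'_le_eLpNorm'_mul_rpow_measure_univ one_pos hp hf'_meas
  calc ‖f b - f a‖ₑ ^ p
      ≤ (eLpNorm' f' p (volume.restrict (Ioc a b)) * .ofReal (b - a) ^ (1 - 1 / p)) ^ p := by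
        gcongr
    _ = _ := by
        rw [ENNReal.mul_rpow_of_nonneg _ _ hp_pos.le, ← ENNReal.rpow_mul,
          ← lintegral_rpow_enorm_eq_rpow_eLpNorm' hp_pos, mul_comm, sub_mul,
          one_div_mul_cancel hp_pos.ne', one_mul]

theorem eLpNorm_sub_le_of_eLpNorm_deriv_le [SFinite μ] {φ φ' : ℝ → X → E} {a b : ℝ} {p C : ℝ≥0∞}
    (hab : a ≤ b) (hp : 1 ≤ p) (hp_top : p ≠ ∞)
    (hφ : ∀ᵐ t ∂μ, ∀ y ∈ Icc a b, HasDerivAt (φ · t) (φ' y t) y)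
    (hφ' : ∀ᵐ t ∂μ, ContinuousOn (φ' · t) (Icc a b))
    (hmeas : AEStronglyMeasurable (Function.uncurry φ') ((volume.restrict (Ioc a b)).prod μ))
    (hC : ∀ y ∈ Ioc a b, eLpNorm (φ' y) p μ ≤ C) :
    eLpNorm (φ b - φ a) p μ ≤ C * .ofReal (b - a) := by
  have hp_zero : p ≠ 0 := (one_pos.trans_le hp).ne'
  set q : ℝ := p.toReal
  have hq : 1 ≤ q := by simpa [q] using ENNReal.toReal_mono hp_top hp
  have hq_pos : 0 < q := one_pos.trans_le hq
  have eLpNorm_rpow (f : X → E) : eLpNorm f p μ ^ q = ∫⁻ t, ‖f t‖ₑ ^ q ∂μ := by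
    rw [eLpNorm_eq_eLpNorm' hp_zero hp_top, ← lintegral_rpow_enorm_eq_rpow_eLpNorm' hq_pos]
  rw [← ENNReal.rpow_le_rpow_iff hq_pos, eLpNorm_rpow]
  calc ∫⁻ t, ‖(φ b - φ a) t‖ₑ ^ q ∂μ
      ≤ ∫⁻ t, .ofReal (b - a) ^ (q - 1) * (∫⁻ y in Ioc a b, ‖φ' y t‖ₑ ^ q) ∂μ := by
        refine lintegral_mono_ae ?_
        filter_upwards [hφ, hφ'] with t ht ht'
        exact enorm_sub_rpow_le_lintegral_deriv hab hq ht ht'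
    _ = .ofReal (b - a) ^ (q - 1) * ∫⁻ y in Ioc a b, eLpNorm (φ' y) p μ ^ q := by
        simp only [eLpNorm_rpow]
        rw [lintegral_const_mul' _ _ (by finiteness [sub_nonneg.2 hq]),
          ← lintegral_lintegral_swap (f := fun y t ↦ ‖φ' y t‖ₑ ^ q) (hmeas.enorm.pow_const q)]
    _ ≤ .ofReal (b - a) ^ (q - 1) * ∫⁻ _ in Ioc a b, C ^ q := by
        refine mul_le_mul_right (setLIntegral_mono' measurableSet_Ioc fun y hy ↦ ?_) _
        exact ENNReal.rpow_le_rpow (hC y hy) hq_pos.le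
    _ = (C * .ofReal (b - a)) ^ q := by
        rw [setLIntegral_const, Real.volume_Ioc, ENNReal.mul_rpow_of_nonneg _ _ hq_pos.le,
          mul_left_comm]
        nth_rw 2 [← ENNReal.rpow_one (.ofReal (b - a))]
        rw [← ENNReal.rpow_add_of_nonneg _ _ (sub_nonneg.2 hq) zero_le_one, sub_add_cancel]

end LpCalculus

section Dilation

variable {E : Type*} [NormedAddCommGroup E]

lemma map_mul_left_restrict_Ioi {c : ℝ} (hc : 0 < c) :
    (volume.restrict (Ioi (0 : ℝ))).map (c * ·) =
      ENNReal.ofReal c⁻¹ • volume.restrict (Ioi (0 : ℝ)) := by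
  have hpre : (c * ·) ⁻¹' Ioi (0 : ℝ) = Ioi 0 := by ext t; simp [hc]
  have hemb : MeasurableEmbedding (c * · : ℝ → ℝ) := measurableEmbedding_mulLeft₀ hc.ne'
  rw [← Measure.restrict_smul, ← abs_of_pos (inv_pos.2 hc), ← Real.map_volume_mul_left hc.ne',
    hemb.restrict_map, hpre]

lemma eLpNorm_comp_mul_left_Ioi (k : ℝ → E) {c : ℝ} (hc : 0 < c) {p : ℝ≥0∞} (hp_top : p ≠ ∞) :
    eLpNorm (fun t ↦ k (c * t)) p (volume.restrict (Ioi 0)) =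
      .ofReal c⁻¹ ^ (1 / p).toReal * eLpNorm k p (volume.restrict (Ioi 0)) := by
  have hemb : MeasurableEmbedding (c * · : ℝ → ℝ) := measurableEmbedding_mulLeft₀ hc.ne'
  rw [← smul_eq_mul, ← eLpNorm_smul_measure_of_ne_top hp_top, ← map_mul_left_restrict_Ioi hc,
    hemb.eLpNorm_map_measure]
  rfl

lemma exists_eLpNorm_comp_rpow_mul_le {k : ℝ → E} {p : ℝ≥0∞} (hp_top : p ≠ ∞)
    (hk : MemLp k p (volume.restrict (Ioi 0))) (α : ℝ) {a b : ℝ} (ha : 0 < a) :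
    ∃ C : ℝ≥0, ∀ y ∈ Icc a b,
      eLpNorm (fun t ↦ k (y ^ α * t)) p (volume.restrict (Ioi 0)) ≤ C := by
  have hpos {y : ℝ} (hy : y ∈ Icc a b) : 0 < y := ha.trans_le hy.1
  have hcont : ContinuousOn (fun y : ℝ ↦ (y ^ α)⁻¹) (Icc a b) :=
    (continuousOn_id.rpow_const fun y hy ↦ .inl (hpos hy).ne').inv₀
      fun y hy ↦ (Real.rpow_pos_of_pos (hpos hy) α).ne'
  obtain ⟨M, hM⟩ := isCompact_Icc.exists_bound_of_continuousOn hcont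
  have hfin : ENNReal.ofReal M ^ (1 / p).toReal * eLpNorm k p (volume.restrict (Ioi 0)) ≠ ∞ := by
    finiteness [hk.eLpNorm_ne_top]
  refine ⟨_, fun y hy ↦ le_of_le_of_eq ?_ (ENNReal.coe_toNNReal hfin).symm⟩
  rw [eLpNorm_comp_mul_left_Ioi k (Real.rpow_pos_of_pos (hpos hy) α) hp_top]
  gcongr
  exact (le_abs_self _).trans (hM y hy)

variable [NormedSpace ℝ E]

/-- The normalised family of dilations `x · g(x ^ α t)`; for `g = I⁻¹ - 1` and `t = I s` this is
`x · (f^{(x)}(s) - 1)`. -/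
noncomputable def rescale (α : ℝ) (g : ℝ → E) (x t : ℝ) : E := x • g (x ^ α * t)

/-- The derivative at `x = 1` of `x ↦ rescale α g x`, where `g'` stands for the derivative of
`g`. -/
def rescaleGenerator (α : ℝ) (g g' : ℝ → E) (t : ℝ) : E := g t + (α * t) • g' t

lemma hasDerivAt_rescale {α : ℝ} {g g' : ℝ → E} {x t : ℝ} (hx : 0 < x)
    (hg : HasDerivAt g (g' (x ^ α * t)) (x ^ α * t)) :
    HasDerivAt (rescale α g · t) (rescaleGenerator α g g' (x ^ α * t)) x := by
  have hpow : HasDerivAt (fun y : ℝ ↦ y ^ α * t) (α * x ^ (α - 1) * t) x :=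
    (Real.hasDerivAt_rpow_const (.inl hx.ne')).mul_const t
  refine ((hasDerivAt_id x).smul (hg.scomp x hpow)).congr_deriv ?_
  have hcoeff : x * (α * x ^ (α - 1) * t) = α * (x ^ α * t) := by
    rw [← sub_add_cancel α 1, Real.rpow_add_one hx.ne']
    ring_nf
  simp only [rescaleGenerator, id_eq, Function.comp_apply, smul_smul, one_smul, hcoeff, add_comm]

lemma continuousOn_rescaleGenerator {α : ℝ} {g g' : ℝ → E} {s : Set ℝ} (hg : ContinuousOn g s)
    (hg' : ContinuousOn g' s) : ContinuousOn (rescaleGenerator α g g') s := by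
  unfold rescaleGenerator
  fun_prop

lemma memLp_rescaleGenerator_iff {α : ℝ} (hα : α ≠ 0) {g g' : ℝ → E} {p : ℝ≥0∞} {μ : Measure ℝ}
    (hg : MemLp g p μ) :
    MemLp (rescaleGenerator α g g') p μ ↔ MemLp (fun t ↦ t • g' t) p μ := by
  refine ⟨fun h ↦ ?_, fun h ↦ ?_⟩
  · have hsub : (fun t ↦ t • g' t) = α⁻¹ • (rescaleGenerator α g g' - g) := by
      ext t
      simp [rescaleGenerator, smul_smul, hα]
    exact hsub ▸ (h.sub hg).const_smul α⁻¹
  · have hadd : rescaleGenerator α g g' = g + α • fun t ↦ t • g' t := by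
      ext t
      simp [rescaleGenerator, smul_smul]
    exact hadd ▸ hg.add (h.const_smul α)

section RescaleLipschitz

variable {α : ℝ} {g g' : ℝ → E} {p : ℝ≥0∞}

lemma eLpNorm_rescaleGenerator_le {C : ℝ≥0∞} (hg : ∀ t ∈ Ioi 0, HasDerivAt g (g' t) t)
    (hC : ∀ᶠ y in 𝓝[>] (1 : ℝ),
      eLpNorm (rescale α g y - rescale α g 1) p (volume.restrict (Ioi 0)) ≤ C * edist y 1) :
    eLpNorm (rescaleGenerator α g g') p (volume.restrict (Ioi 0)) ≤ C := by
  refine eLpNorm_deriv_le_of_eLpNorm_sub_le (φ := rescale α g) (fun y hy ↦ ?_) ?_ hC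
  · have hy_pos : 0 < y ^ α := Real.rpow_pos_of_pos (one_pos.trans_le hy) α
    have hcont : ContinuousOn (rescale α g y) (Ioi 0) := fun t ht ↦
      ((hg _ (mul_pos hy_pos ht)).continuousAt.comp
        (by fun_prop)).const_smul y |>.continuousWithinAt
    exact hcont.aestronglyMeasurable measurableSet_Ioi
  · filter_upwards [ae_restrict_mem measurableSet_Ioi] with t ht
    simpa using hasDerivAt_rescale (α := α) one_pos (hg ((1 : ℝ) ^ α * t) (by simpa using ht))

variable [CompleteSpace E]

lemma eLpNorm_rescale_sub_le {a b : ℝ} {C : ℝ≥0∞} (ha : 0 < a) (hab : a ≤ b) (hp : 1 ≤ p)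
    (hp_top : p ≠ ∞) (hg : ∀ t ∈ Ioi 0, HasDerivAt g (g' t) t) (hg' : ContinuousOn g' (Ioi 0))
    (hC : ∀ y ∈ Ioc a b,
      eLpNorm (fun t ↦ rescaleGenerator α g g' (y ^ α * t)) p (volume.restrict (Ioi 0)) ≤ C) :
    eLpNorm (rescale α g b - rescale α g a) p (volume.restrict (Ioi 0)) ≤ C * edist b a := by
  have hmaps : MapsTo (fun z : ℝ × ℝ ↦ z.1 ^ α * z.2) (Icc a b ×ˢ Ioi 0) (Ioi 0) := fun z hz ↦
    mul_pos (Real.rpow_pos_of_pos (ha.trans_le hz.1.1) α) hz.2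
  have hcont : ContinuousOn
      (fun z : ℝ × ℝ ↦ rescaleGenerator α g g' (z.1 ^ α * z.2)) (Icc a b ×ˢ Ioi 0) :=
    (continuousOn_rescaleGenerator (HasDerivAt.continuousOn hg) hg').comp
      ((continuousOn_fst.rpow_const fun z hz ↦ .inl (ha.trans_le hz.1.1).ne').mul
        continuousOn_snd) hmaps
  rw [edist_dist, Real.dist_eq, abs_of_nonneg (sub_nonneg.2 hab)]
  refine eLpNorm_sub_le_of_eLpNorm_deriv_le hab hp hp_top ?_ ?_ ?_ hC
  · filter_upwards [ae_restrict_mem measurableSet_Ioi] with t ht y hy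
    have hy_pos : 0 < y := ha.trans_le hy.1
    exact hasDerivAt_rescale hy_pos (hg _ (mul_pos (Real.rpow_pos_of_pos hy_pos α) ht))
  · filter_upwards [ae_restrict_mem measurableSet_Ioi] with t ht
    exact hcont.comp (f := fun y ↦ (y, t)) (by fun_prop) fun y hy ↦ ⟨hy, ht⟩
  · rw [Measure.prod_restrict]
    exact (hcont.mono (prod_mono_left Ioc_subset_Icc_self)).aestronglyMeasurable
      (measurableSet_Ioc.prod measurableSet_Ioi)

theorem rescale_locally_lipschitz_iff (hα : α ≠ 0) (hp : 1 ≤ p) (hp_top : p ≠ ∞)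
    (hg : ∀ t ∈ Ioi 0, HasDerivAt g (g' t) t) (hg' : ContinuousOn g' (Ioi 0))
    (hgp : MemLp g p (volume.restrict (Ioi 0))) :
    (∀ K : Set ℝ, IsCompact K → K ⊆ Ioi 0 → ∃ C : ℝ≥0, ∀ x ∈ K, ∀ x' ∈ K,
        eLpNorm (rescale α g x - rescale α g x') p (volume.restrict (Ioi 0)) ≤ C * edist x x') ↔
      MemLp (fun t ↦ t • g' t) p (volume.restrict (Ioi 0)) := by
  have hk_cont := continuousOn_rescaleGenerator (α := α) (HasDerivAt.continuousOn hg) hg'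
  rw [← memLp_rescaleGenerator_iff hα hgp]
  refine ⟨fun h ↦ ?_, fun hk K hK hK_pos ↦ ?_⟩
  · obtain ⟨C, hC⟩ := h (Icc 1 2) isCompact_Icc fun x hx ↦ one_pos.trans_le hx.1
    refine ⟨hk_cont.aestronglyMeasurable measurableSet_Ioi,
      (eLpNorm_rescaleGenerator_le hg ?_).trans_lt (ENNReal.coe_lt_top (r := C))⟩
    filter_upwards [Ioo_mem_nhdsGT one_lt_two] with y hy
    exact hC y (Ioo_subset_Icc_self hy) 1 (by simp)
  · rcases K.eq_empty_or_nonempty with rfl | hK_ne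
    · simp
    have ha : 0 < sInf K := hK_pos (hK.sInf_mem hK_ne)
    have hK_sub : K ⊆ Icc (sInf K) (sSup K) := hK.isBounded.subset_Icc_sInf_sSup
    obtain ⟨C, hC⟩ := exists_eLpNorm_comp_rpow_mul_le hp_top hk α (b := sSup K) ha
    have hlip {x x' : ℝ} (hx : x ∈ K) (hx' : x' ∈ K) (hle : x' ≤ x) :
        eLpNorm (rescale α g x - rescale α g x') p (volume.restrict (Ioi 0)) ≤ C * edist x x' :=
      eLpNorm_rescale_sub_le (hK_pos hx') hle hp hp_top hg hg' fun y hy ↦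
        hC y ⟨(hK_sub hx').1.trans hy.1.le, hy.2.trans (hK_sub hx).2⟩
    refine ⟨C, fun x hx x' hx' ↦ ?_⟩
    rcases le_total x' x with hle | hle
    · exact hlip hx hx' hle
    · rw [eLpNorm_sub_comm, edist_comm]
      exact hlip hx' hx hle

end RescaleLipschitz

end Dilation

lemma exists_mul_edist_bound_iff_rpow {X : Type*} [PseudoMetricSpace X] {K : Set X}
    {N : X → X → ℝ≥0∞} {p : ℝ} (hp : 0 < p) :
    (∃ C > (0 : ℝ), ∀ x ∈ K, ∀ x' ∈ K, N x x' ^ p ≤ .ofReal (C * dist x x' ^ p)) ↔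
      ∃ C : ℝ≥0, ∀ x ∈ K, ∀ x' ∈ K, N x x' ≤ C * edist x x' := by
  have hpow (C : ℝ≥0) (x x' : X) :
      ENNReal.ofReal ((C : ℝ) ^ p * dist x x' ^ p) = (C * edist x x') ^ p := by
    rw [← Real.mul_rpow C.coe_nonneg dist_nonneg,
      ← ENNReal.ofReal_rpow_of_nonneg (by positivity) hp.le, ENNReal.ofReal_mul C.coe_nonneg,
      edist_dist, ENNReal.ofReal_coe_nnreal]
  constructor
  · rintro ⟨C, hC_pos, hC⟩
    refine ⟨(C ^ p⁻¹).toNNReal, fun x hx x' hx' ↦ ?_⟩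
    rw [← ENNReal.rpow_le_rpow_iff hp, ← hpow, Real.coe_toNNReal _ (by positivity),
      Real.rpow_inv_rpow hC_pos.le hp.ne']
    exact hC x hx x' hx'
  · rintro ⟨C, hC⟩
    refine ⟨(C : ℝ) ^ p + 1, by positivity, fun x hx x' hx' ↦ ?_⟩
    calc N x x' ^ p ≤ (C * edist x x') ^ p := by gcongr; exact hC x hx x' hx'
      _ ≤ _ := by rw [← hpow]; gcongr; simp

section ChangeOfVariables

lemma hasStrictDerivAt_setIntegral_Ioo {E : Type*} [NormedAddCommGroup E] [NormedSpace ℝ E]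
    [CompleteSpace E] {f : ℝ → E} {a b s : ℝ} (hf : ContinuousOn f (Ioo a b)) (hs : s ∈ Ioo a b)
    (hint : IntegrableOn f (Ioo a s)) :
    HasStrictDerivAt (fun r ↦ ∫ u in Ioo a r, f u) (f s) s := by
  have hnhds : Ioo a b ∈ 𝓝 s := isOpen_Ioo.mem_nhds hs
  refine (intervalIntegral.integral_hasStrictDerivAt_right
    ((intervalIntegrable_iff_integrableOn_Ioo_of_le hs.1.le).2 hint)
    (hf.stronglyMeasurableAtFilter isOpen_Ioo s hs)
    (hf.continuousAt hnhds)).congr_of_eventuallyEq ?_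
  filter_upwards [hnhds] with r hr
  rw [intervalIntegral.integral_of_le hr.1.le, integral_Ioc_eq_integral_Ioo]

lemma setIntegral_Ioo_pos {f : ℝ → ℝ} {a s : ℝ} (has : a < s) (hint : IntegrableOn f (Ioo a s))
    (hpos : ∀ u ∈ Ioo a s, 0 < f u) : 0 < ∫ u in Ioo a s, f u := by
  rw [← integral_Ioc_eq_integral_Ioo, ← intervalIntegral.integral_of_le has.le]
  exact intervalIntegral.intervalIntegral_pos_of_pos_on
    ((intervalIntegrable_iff_integrableOn_Ioo_of_le has.le).2 hint) hpos has

lemma setLIntegral_norm_rpow_comp_mul_deriv {E : Type*} [NormedAddCommGroup E] {f f' : ℝ → ℝ}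
    {s : Set ℝ} (hs : MeasurableSet s) (hf : ∀ x ∈ s, HasDerivWithinAt f (f' x) s x)
    (hf_inj : InjOn f s) (hf' : ∀ x ∈ s, 0 ≤ f' x) {p : ℝ} (hp : 0 < p) (F : ℝ → E) :
    ∫⁻ x in s, .ofReal (‖F (f x)‖ ^ p * f' x) =
      eLpNorm F (.ofReal p) (volume.restrict (f '' s)) ^ p := by
  rw [eLpNorm_eq_eLpNorm' (by simpa) (by simp), ENNReal.toReal_ofReal hp.le,
    ← lintegral_rpow_enorm_eq_rpow_eLpNorm' hp,
    lintegral_image_eq_lintegral_abs_deriv_mul hs hf hf_inj]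
  refine setLIntegral_congr_fun hs fun x hx ↦ ?_
  rw [abs_of_nonneg (hf' x hx), ← ofReal_norm, ENNReal.ofReal_rpow_of_nonneg (by positivity) hp.le,
    mul_comm, ENNReal.ofReal_mul (hf' x hx)]

theorem lipschitz_inverse_dilation_iff {U : Set ℝ} (hU : IsOpen U) {lam I J : ℝ → ℝ}
    (hlam : ContinuousOn lam U) (hpos : ∀ s ∈ U, 0 < lam s)
    (hI : ∀ s ∈ U, HasStrictDerivAt I (lam s) s) (hI_maps : MapsTo I U (Ioi 0))
    (hJ_maps : MapsTo J (Ioi 0) U) (hinv : InvOn J I U (Ioi 0)) {α : ℝ} (hα : α ≠ 0) {p : ℝ}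
    (hp : 1 ≤ p) {e : ℝ} (hmom : ∫⁻ s in U, .ofReal (|s - e| ^ p * lam s) < ∞) :
    (∀ K : Set ℝ, IsCompact K → K ⊆ Ioi 0 → ∃ C > (0 : ℝ), ∀ x ∈ K, ∀ x' ∈ K,
        ∫⁻ s in U, .ofReal
            (|x * (J (x ^ α * I s) - e) - x' * (J (x' ^ α * I s) - e)| ^ p * lam s) ≤
          .ofReal (C * |x - x'| ^ p)) ↔
      ∫⁻ s in U, .ofReal (|I s / lam s| ^ p * lam s) < ∞ := by
  have hp_pos : 0 < p := one_pos.trans_le hp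
  have hJ : ∀ t ∈ Ioi 0, HasDerivAt J (lam (J t))⁻¹ t := fun t ht ↦ by
    have hU_nhds : U ∈ 𝓝 (J t) := hU.mem_nhds (hJ_maps ht)
    simpa only [hinv.2 ht] using ((hI _ (hJ_maps ht)).to_local_left_inverse
      (hpos _ (hJ_maps ht)).ne' (eventually_of_mem hU_nhds hinv.1)).hasDerivAt
  have hJ_cont : ContinuousOn J (Ioi 0) := HasDerivAt.continuousOn hJ
  have hJ' : ContinuousOn (fun t ↦ (lam (J t))⁻¹) (Ioi 0) :=
    (hlam.comp hJ_cont hJ_maps).inv₀ fun t ht ↦ (hpos _ (hJ_maps ht)).ne'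
  have transfer (F : ℝ → ℝ) : ∫⁻ s in U, .ofReal (|F (I s)| ^ p * lam s) =
      eLpNorm F (.ofReal p) (volume.restrict (Ioi 0)) ^ p := by
    rw [← (hinv.bijOn hI_maps hJ_maps).image_eq]
    exact setLIntegral_norm_rpow_comp_mul_deriv hU.measurableSet
      (fun s hs ↦ (hI s hs).hasDerivAt.hasDerivWithinAt) hinv.1.injOn (fun s hs ↦ (hpos s hs).le)
      hp_pos F
  have transfer_memLp {F f : ℝ → ℝ} (hF : ContinuousOn F (Ioi 0)) (hFf : ∀ s ∈ U, F (I s) = f s) :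
      ∫⁻ s in U, .ofReal (|f s| ^ p * lam s) < ∞ ↔
        MemLp F (.ofReal p) (volume.restrict (Ioi 0)) := by
    have hcongr : ∫⁻ s in U, .ofReal (|f s| ^ p * lam s) =
        ∫⁻ s in U, .ofReal (|F (I s)| ^ p * lam s) :=
      setLIntegral_congr_fun hU.measurableSet fun s hs ↦ by simp only [hFf s hs]
    rw [hcongr, transfer, ENNReal.rpow_lt_top_iff_of_pos hp_pos, MemLp,
      and_iff_right (hF.aestronglyMeasurable measurableSet_Ioi)]
  have hmom' : MemLp (fun t ↦ J t - e) (.ofReal p) (volume.restrict (Ioi 0)) :=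
    (transfer_memLp (F := fun t ↦ J t - e) (hJ_cont.sub continuousOn_const)
      fun s hs ↦ by rw [hinv.1 hs]).1 hmom
  rw [transfer_memLp (F := fun t ↦ t • (lam (J t))⁻¹) (continuousOn_id.smul hJ')
      fun s hs ↦ by rw [hinv.1 hs, smul_eq_mul, div_eq_mul_inv],
    ← rescale_locally_lipschitz_iff hα (ENNReal.one_le_ofReal.2 hp) ENNReal.ofReal_ne_top
      (fun t ht ↦ (hJ t ht).sub_const e) hJ' hmom']
  simp only [← exists_mul_edist_bound_iff_rpow hp_pos, ← transfer, Real.dist_eq, rescale,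
    Pi.sub_apply, smul_eq_mul]

end ChangeOfVariables

theorem integrated_lipschitz_iff_generator_L2_general
    (lam : ℝ → ℝ)
    (hcont : ContinuousOn lam (Ioo 0 1))
    (hpos : ∀ s ∈ Ioo (0 : ℝ) 1, 0 < lam s)
    (hint : ∀ s ∈ Ico (0 : ℝ) 1, IntegrableOn lam (Ioo 0 s))
    (I : ℝ → ℝ) (hIdef : ∀ s, I s = ∫ u in Ioo (0 : ℝ) s, lam u)
    (J : ℝ → ℝ)
    (hJI : ∀ s ∈ Ico (0 : ℝ) 1, J (I s) = s)
    (hIJ : ∀ t : ℝ, 0 ≤ t → I (J t) = t ∧ J t ∈ Ico (0 : ℝ) 1)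
    (p : ℝ) (hp : 1 ≤ p)
    (hmom : (∫⁻ s in Ioo (0 : ℝ) 1, ENNReal.ofReal (|1 - s| ^ p * lam s)) < ⊤)
    (α : ℝ) (hα : α ≠ 0) :
    ((∀ K : Set ℝ, IsCompact K → K ⊆ Ioi 0 → ∃ C > (0 : ℝ), ∀ x ∈ K, ∀ x' ∈ K,
        (∫⁻ s in Ioo (0 : ℝ) 1, ENNReal.ofReal
            (|x * (J (x ^ α * I s) - 1) - x' * (J (x' ^ α * I s) - 1)| ^ p * lam s))
          ≤ ENNReal.ofReal (C * |x - x'| ^ p))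
      ↔ (∫⁻ s in Ioo (0 : ℝ) 1, ENNReal.ofReal (|I s / lam s| ^ p * lam s)) < ⊤) := by
  have hI_deriv : ∀ s ∈ Ioo (0 : ℝ) 1, HasStrictDerivAt I (lam s) s := fun s hs ↦
    funext hIdef ▸ hasStrictDerivAt_setIntegral_Ioo hcont hs (hint s (Ioo_subset_Ico_self hs))
  have hI_maps : MapsTo I (Ioo 0 1) (Ioi 0) := fun s hs ↦ by
    rw [mem_Ioi, hIdef]
    exact setIntegral_Ioo_pos hs.1 (hint s (Ioo_subset_Ico_self hs))
      fun u hu ↦ hpos u (Ioo_subset_Ioo_right hs.2.le hu)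
  have hJ_maps : MapsTo J (Ioi 0) (Ioo 0 1) := fun t ht ↦ by
    obtain ⟨hIJt, hJt⟩ := hIJ t (le_of_lt ht)
    refine ⟨hJt.1.lt_of_ne fun h ↦ ?_, hJt.2⟩
    rw [← h, hIdef, Ioo_self, setIntegral_empty] at hIJt
    exact ht.ne hIJt
  have hinv : InvOn J I (Ioo 0 1) (Ioi 0) :=
    ⟨fun s hs ↦ hJI s (Ioo_subset_Ico_self hs), fun t ht ↦ (hIJ t (le_of_lt ht)).1⟩
  exact lipschitz_inverse_dilation_iff isOpen_Ioo hcont hpos hI_deriv hI_maps hJ_maps hinv hα hp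
    (by simpa only [abs_sub_comm] using hmom)

/-- **Integrated Lipschitz condition via the generator (binary conservative case).**
Let `lam` be a positive continuous density on `(0,1)` with `I(s) := ∫₀^s lam` finite for
`s < 1` and `I(s) → ∞` as `s → 1⁻`, let `J` be the inverse of `I : [0,1) → [0,∞)`, and
assume moreover that `∫₀¹ (1 − s)²·lam(s) ds < ∞`.  For `α > 0` and `x > 0` set
`f^{(x)}(s) := I⁻¹(x^α·I(s))`.  Then the compact-uniform integrated Lipschitz estimate
holds for the family `(f^{(x)})` if and only if `∫₀¹ (I(s)/lam(s))²·lam(s) ds < ∞`,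
i.e. the generator `v = −α·I/lam` is in `L²(ν)`. -/
theorem integrated_lipschitz_iff_generator_L2
    (lam : ℝ → ℝ)
    (hcont : ContinuousOn lam (Ioo 0 1))
    (hpos : ∀ s ∈ Ioo (0:ℝ) 1, 0 < lam s)
    (hint : ∀ s ∈ Ico (0:ℝ) 1, IntegrableOn lam (Ioo 0 s))
    (I : ℝ → ℝ) (hIdef : ∀ s, I s = ∫ u in Ioo (0:ℝ) s, lam u)
    (htop : Tendsto I (nhdsWithin 1 (Iio 1)) atTop)
    (J : ℝ → ℝ)
    (hJI : ∀ s ∈ Ico (0:ℝ) 1, J (I s) = s)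
    (hIJ : ∀ t : ℝ, 0 ≤ t → I (J t) = t ∧ J t ∈ Ico (0:ℝ) 1)
    (hmom : (∫⁻ s in Ioo (0:ℝ) 1, ENNReal.ofReal ((1 - s) ^ 2 * lam s)) < ⊤)
    (α : ℝ) (hα : 0 < α) :
    ((∀ K : Set ℝ, IsCompact K → K ⊆ Ioi 0 → ∃ C > (0:ℝ), ∀ x ∈ K, ∀ x' ∈ K,
        (∫⁻ s in Ioo (0:ℝ) 1, ENNReal.ofReal
            ((x * (J (x ^ α * I s) - 1) - x' * (J (x' ^ α * I s) - 1)) ^ 2 * lam s))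
          ≤ ENNReal.ofReal (C * (x - x') ^ 2))
      ↔ (∫⁻ s in Ioo (0:ℝ) 1, ENNReal.ofReal ((I s / lam s) ^ 2 * lam s)) < ⊤) := by
  simpa only [Real.rpow_ofNat, sq_abs] using
    integrated_lipschitz_iff_generator_L2_general lam hcont hpos hint I hIdef J hJI hIJ 2
      one_le_two (by simpa only [Real.rpow_ofNat, sq_abs] using hmom) α hα.ne'
end

section
/- For each y ∈ [0,1], the maps x ↦ x·m_x(y) and x ↦ x·(1 − m_x(y)) are nondecreasing on (0, ∞). In particular, for every x ∈ (0,1] and y ∈ [0,1], x·m_x(y) ≤ y and x·(1 − m_x(y)) ≤ 1 − y. -/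
open Set

/-- The magic function `m_x(y) = x·y/(x·y + (1 − y))`. -/
noncomputable def magic (x y : ℝ) : ℝ := x * y / (x * y + (1 - y))

/-!
Both products are governed by the single function `g(x) = x / (x·y + (1 − y))`: one has
`m_x(y) = y·g(x)` and `x·(1 − m_x(y)) = (1 − y)·g(x)`. Cross-multiplying, the monotonicity of `g`
reduces to that of `x ↦ (1 − y)·x`. The bounds for `x ≤ 1` compare `x` with `1`, where `m_1(y) = y`.
-/

theorem monotoneOn_div_mul_add {𝕜 : Type*} [Field 𝕜] [LinearOrder 𝕜] [IsStrictOrderedRing 𝕜]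
    (a : 𝕜) {b : 𝕜} (hb : 0 ≤ b) :
    MonotoneOn (fun x => x / (x * a + b)) {x | 0 < x * a + b} := by
  intro u hu v hv huv
  refine (div_le_div_iff₀ hu hv).2 ?_
  calc u * (v * a + b) = u * v * a + u * b := by ring
    _ ≤ u * v * a + v * b := by gcongr
    _ = v * (u * a + b) := by ring

theorem magic_one (y : ℝ) : magic 1 y = y := by
  simp [magic]

theorem magic_eq_mul_div (x y : ℝ) : magic x y = y * (x / (x * y + (1 - y))) := by
  rw [magic, mul_comm x y, mul_div_assoc]

theorem one_sub_magic {x y : ℝ} (h : x * y + (1 - y) ≠ 0) :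
    1 - magic x y = (1 - y) / (x * y + (1 - y)) := by
  rw [magic, one_sub_div h, add_sub_cancel_left]

section UnitInterval

variable {x y : ℝ}

theorem magic_denom_pos (hx : 0 < x) (hy : y ∈ Icc (0 : ℝ) 1) : 0 < x * y + (1 - y) := by
  obtain h | h := hy.1.eq_or_lt
  · simp [← h]
  · exact add_pos_of_pos_of_nonneg (mul_pos hx h) (sub_nonneg.2 hy.2)

theorem magic_nonneg (hx : 0 ≤ x) (hy : y ∈ Icc (0 : ℝ) 1) : 0 ≤ magic x y :=
  have hxy : 0 ≤ x * y := mul_nonneg hx hy.1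
  div_nonneg hxy (add_nonneg hxy (sub_nonneg.2 hy.2))

theorem monotoneOn_div_magic_denom (hy : y ∈ Icc (0 : ℝ) 1) :
    MonotoneOn (fun x => x / (x * y + (1 - y))) (Ioi 0) :=
  (monotoneOn_div_mul_add y (sub_nonneg.2 hy.2)).mono fun _ hx => magic_denom_pos hx hy

theorem monotoneOn_magic (hy : y ∈ Icc (0 : ℝ) 1) : MonotoneOn (fun x => magic x y) (Ioi 0) := by
  simp only [magic_eq_mul_div]
  exact (monotone_mul_left_of_nonneg hy.1).comp_monotoneOn (monotoneOn_div_magic_denom hy)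

theorem monotoneOn_mul_magic (hy : y ∈ Icc (0 : ℝ) 1) :
    MonotoneOn (fun x => x * magic x y) (Ioi 0) :=
  monotoneOn_id.mul (monotoneOn_magic hy) (fun _ hx => le_of_lt hx)
    fun _ hx => magic_nonneg (le_of_lt hx) hy

theorem monotoneOn_mul_one_sub_magic (hy : y ∈ Icc (0 : ℝ) 1) :
    MonotoneOn (fun x => x * (1 - magic x y)) (Ioi 0) := by
  refine ((monotone_mul_left_of_nonneg (sub_nonneg.2 hy.2)).comp_monotoneOn
    (monotoneOn_div_magic_denom hy)).congr fun x hx => ?_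
  simp only [Function.comp_apply, one_sub_magic (magic_denom_pos hx hy).ne', mul_div_left_comm]

theorem mul_magic_le (hx : x ∈ Ioc (0 : ℝ) 1) (hy : y ∈ Icc (0 : ℝ) 1) : x * magic x y ≤ y := by
  simpa only [magic_one, one_mul] using monotoneOn_mul_magic hy hx.1 (mem_Ioi.2 one_pos) hx.2

theorem mul_one_sub_magic_le (hx : x ∈ Ioc (0 : ℝ) 1) (hy : y ∈ Icc (0 : ℝ) 1) :
    x * (1 - magic x y) ≤ 1 - y := by
  simpa only [magic_one, one_mul] using
    monotoneOn_mul_one_sub_magic hy hx.1 (mem_Ioi.2 one_pos) hx.2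

end UnitInterval

/-- **Monotonicity of the magic family.**  For each `y ∈ [0,1]` the maps
`x ↦ x·m_x(y)` and `x ↦ x·(1 − m_x(y))` are nondecreasing on `(0,∞)`; in particular
`x·m_x(y) ≤ y` and `x·(1 − m_x(y)) ≤ 1 − y` for `x ∈ (0,1]` and `y ∈ [0,1]`. -/
theorem magic_monotone :
    (∀ y ∈ Icc (0:ℝ) 1,
      MonotoneOn (fun x => x * magic x y) (Ioi 0) ∧
      MonotoneOn (fun x => x * (1 - magic x y)) (Ioi 0)) ∧
    (∀ x ∈ Ioc (0:ℝ) 1, ∀ y ∈ Icc (0:ℝ) 1,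
      x * magic x y ≤ y ∧ x * (1 - magic x y) ≤ 1 - y) :=
  ⟨fun _ hy => ⟨monotoneOn_mul_magic hy, monotoneOn_mul_one_sub_magic hy⟩,
    fun _ hx _ hy => ⟨mul_magic_le hx hy, mul_one_sub_magic_le hx hy⟩⟩
end

section
/- For every γ ∈ (0, 2) and every 0 < a ≤ b there exists a constant C > 0 such that for all x, x' ∈ [a, b]: ∫₀¹ ( x·(m_x(y) − 1) − x'·(m_{x'}(y) − 1) )² · y^{γ−1}·(1 − y)^{−1−γ} dy ≤ C·(x − x')². -/
open MeasureTheory Set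

/-! One has `m_x(y) - 1 = -(1 - y) / D_x(y)` with `D_x(y) = x y + (1 - y)`, so over the common
denominator `D_x(y) D_{x'}(y)` the difference `x (m_x(y) - 1) - x' (m_{x'}(y) - 1)` has numerator
`-(1 - y)² (x - x')`. As `D_x(y)` is a convex combination of `x` and `1`, it stays away from `0`.
The factor `(1 - y)⁴` obtained by squaring turns `ν_γ` into a multiple of the Beta distribution
with parameters `γ` and `4 - γ`. -/

lemma magic_sub_one {x y : ℝ} (h : x * y + (1 - y) ≠ 0) :
    magic x y - 1 = -(1 - y) / (x * y + (1 - y)) := by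
  rw [magic, div_sub_one h]
  ring

lemma mul_magic_sub_one_sub {x x' y : ℝ} (h : x * y + (1 - y) ≠ 0)
    (h' : x' * y + (1 - y) ≠ 0) :
    x * (magic x y - 1) - x' * (magic x' y - 1) =
      -((1 - y) ^ 2 * (x - x')) / ((x * y + (1 - y)) * (x' * y + (1 - y))) := by
  rw [magic_sub_one h, magic_sub_one h', mul_div_assoc', mul_div_assoc', div_sub_div _ _ h h']
  ring

lemma min_one_le_mul_add_one_sub (x : ℝ) {y : ℝ} (hy : y ∈ Icc (0 : ℝ) 1) :
    min x 1 ≤ x * y + (1 - y) := by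
  simpa only [smul_eq_mul, mul_one, mul_comm y x] using
    Convex.min_le_combo x 1 hy.1 (sub_nonneg.2 hy.2) (add_sub_cancel y 1)

lemma abs_mul_magic_sub_one_sub_le {a x x' y : ℝ} (ha : 0 < a) (hx : a ≤ x) (hx' : a ≤ x')
    (hy : y ∈ Icc (0 : ℝ) 1) :
    |x * (magic x y - 1) - x' * (magic x' y - 1)| ≤
      (1 - y) ^ 2 * |x - x'| / min a 1 ^ 2 := by
  have hmin : 0 < min a 1 := lt_min ha one_pos
  have le_denom {z : ℝ} (hz : a ≤ z) : min a 1 ≤ z * y + (1 - y) :=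
    (min_le_min_right 1 hz).trans (min_one_le_mul_add_one_sub z hy)
  have hD : 0 < x * y + (1 - y) := hmin.trans_le (le_denom hx)
  have hD' : 0 < x' * y + (1 - y) := hmin.trans_le (le_denom hx')
  rw [mul_magic_sub_one_sub hD.ne' hD'.ne', abs_div, abs_neg, abs_mul, abs_sq,
    abs_of_pos (mul_pos hD hD'), sq (min a 1)]
  gcongr
  exacts [le_denom hx, le_denom hx']

lemma setLIntegral_rpow_mul_one_sub_rpow {α β : ℝ} (hα : 0 < α) (hβ : 0 < β) :
    ∫⁻ y in Ico (0 : ℝ) 1, ENNReal.ofReal (y ^ (α - 1) * (1 - y) ^ (β - 1)) =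
      ENNReal.ofReal (ProbabilityTheory.beta α β) := by
  have hB : 0 < ProbabilityTheory.beta α β := ProbabilityTheory.beta_pos hα hβ
  have hpdf := ProbabilityTheory.lintegral_betaPDF_eq_one hα hβ
  simp_rw [ProbabilityTheory.lintegral_betaPDF, mul_assoc,
    ENNReal.ofReal_mul (one_div_pos.2 hB).le] at hpdf
  rw [lintegral_const_mul' _ _ ENNReal.ofReal_ne_top, one_div,
    ENNReal.ofReal_inv_of_pos hB] at hpdf
  rw [setLIntegral_congr Ioo_ae_eq_Ico.symm, ENNReal.eq_inv_of_mul_eq_one_left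
    ((mul_comm _ _).trans hpdf), inv_inv]

lemma sq_mul_magic_sub_one_sub_mul_le {a x x' y : ℝ} (γ : ℝ) (ha : 0 < a) (hx : a ≤ x)
    (hx' : a ≤ x') (hy : y ∈ Ico (0 : ℝ) 1) :
    (x * (magic x y - 1) - x' * (magic x' y - 1)) ^ 2 *
        (y ^ (γ - 1) * (1 - y) ^ (-1 - γ)) ≤
      (x - x') ^ 2 / min a 1 ^ 4 * (y ^ (γ - 1) * (1 - y) ^ (4 - γ - 1)) := by
  have hy1 : 0 < 1 - y := sub_pos.2 hy.2
  have hpow : (1 - y) ^ (4 - γ - 1) = (1 - y) ^ 4 * (1 - y) ^ (-1 - γ) := by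
    rw [← Real.rpow_natCast, ← Real.rpow_add hy1]
    congr 1
    push_cast
    ring
  have hdensity : 0 ≤ y ^ (γ - 1) * (1 - y) ^ (-1 - γ) :=
    mul_nonneg (Real.rpow_nonneg hy.1 _) (Real.rpow_nonneg hy1.le _)
  calc
    _ ≤ ((1 - y) ^ 2 * |x - x'| / min a 1 ^ 2) ^ 2 *
        (y ^ (γ - 1) * (1 - y) ^ (-1 - γ)) := by
      rw [← sq_abs (x * _ - _)]
      gcongr
      exact abs_mul_magic_sub_one_sub_le ha hx hx' (Ico_subset_Icc_self hy)
    _ = _ := by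
      rw [hpow, div_pow, mul_pow, sq_abs]
      ring

theorem magic_integrated_lipschitz_general {γ : ℝ} (hγ : γ ∈ Ioo (0 : ℝ) 4) {a x x' : ℝ}
    (ha : 0 < a) (hx : a ≤ x) (hx' : a ≤ x') :
    ∫⁻ y in Ico (0 : ℝ) 1, ENNReal.ofReal
        ((x * (magic x y - 1) - x' * (magic x' y - 1)) ^ 2 *
          (y ^ (γ - 1) * (1 - y) ^ (-1 - γ))) ≤
      ENNReal.ofReal (ProbabilityTheory.beta γ (4 - γ) / min a 1 ^ 4 * (x - x') ^ 2) := by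
  have hK : 0 ≤ (x - x') ^ 2 / min a 1 ^ 4 := by positivity
  calc
    _ ≤ ∫⁻ y in Ico (0 : ℝ) 1, ENNReal.ofReal ((x - x') ^ 2 / min a 1 ^ 4) *
        ENNReal.ofReal (y ^ (γ - 1) * (1 - y) ^ (4 - γ - 1)) := by
      refine setLIntegral_mono' measurableSet_Ico fun y hy ↦ ?_
      rw [← ENNReal.ofReal_mul hK]
      exact ENNReal.ofReal_le_ofReal (sq_mul_magic_sub_one_sub_mul_le γ ha hx hx' hy)
    _ = ENNReal.ofReal ((x - x') ^ 2 / min a 1 ^ 4) *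
        ENNReal.ofReal (ProbabilityTheory.beta γ (4 - γ)) := by
      rw [lintegral_const_mul' _ _ ENNReal.ofReal_ne_top,
        setLIntegral_rpow_mul_one_sub_rpow hγ.1 (sub_pos.2 hγ.2)]
    _ = _ := by
      rw [← ENNReal.ofReal_mul hK]
      congr 1
      ring

/-- **Integrated Lipschitz estimate for the magic family against `ν_γ`.**
For `γ ∈ (0,2)` and `0 < a ≤ b` there is `C > 0` such that for all `x, x' ∈ [a,b]`,
`∫₀¹ (x(m_x(y) − 1) − x'(m_{x'}(y) − 1))²·y^{γ−1}(1−y)^{−1−γ} dy ≤ C·(x − x')²`. -/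
theorem magic_integrated_lipschitz (γ : ℝ) (hγ : γ ∈ Ioo (0:ℝ) 2)
    (a b : ℝ) (ha : 0 < a) (hab : a ≤ b) :
    ∃ C > (0:ℝ), ∀ x ∈ Icc a b, ∀ x' ∈ Icc a b,
      (∫⁻ y in Ico (0:ℝ) 1, ENNReal.ofReal
          ((x * (magic x y - 1) - x' * (magic x' y - 1)) ^ 2 *
            (y ^ (γ - 1) * (1 - y) ^ (-1 - γ))))
        ≤ ENNReal.ofReal (C * (x - x') ^ 2) := by
  have hγ4 : γ ∈ Ioo (0 : ℝ) 4 := ⟨hγ.1, by linarith [hγ.2]⟩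
  exact ⟨_, div_pos (ProbabilityTheory.beta_pos hγ4.1 (sub_pos.2 hγ4.2)) (by positivity),
    fun _ hx _ hx' ↦ magic_integrated_lipschitz_general hγ4 ha hx.1 hx'.1⟩
end

section
/- For every x > 0 and every s ∈ [1/2, 1): 𝚏_x(s) ∈ [1/2, 1), 𝚏_x(1/2) = 1/2, and h(𝚏_x(s)) = x·h(s). -/
/-!
In the coordinate `r = 2s - 1` the function `h` is the image of `u = r²` under `u ↦ 4u / (1 - u)`,
which maps `[0, 1)` bijectively onto `[0, ∞)` with inverse `a ↦ a / (4 + a)`. Inverting this at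
`x * h(s)` gives `u = h(s) / (4x⁻¹ + h(s))`, and `𝚏_x(s) = (1 + √u) / 2` is the corresponding point
of `[1/2, 1)`.
-/

open Set

/-- `h(s) = (1 − 2s)²/(s(1 − s))`. -/
noncomputable def hBro (s : ℝ) : ℝ := (1 - 2 * s) ^ 2 / (s * (1 - s))

/-- The locally largest growing family of the Brownian CRT (by mass):
`𝚏_x(s) = (1/2)(1 + √(h(s)/(4x⁻¹ + h(s))))`. -/
noncomputable def fBro (x s : ℝ) : ℝ :=
  (1 / 2) * (1 + Real.sqrt (hBro s / (4 * x⁻¹ + hBro s)))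

theorem div_add_div_one_sub_div_add {K : Type*} [Field K] {a b : K} (h : b + a ≠ 0) :
    a / (b + a) / (1 - a / (b + a)) = a / b := by
  rw [one_sub_div h, add_sub_cancel_right, div_div_div_cancel_right₀ h]

theorem sqrt_div_add_mem_Ico {a b : ℝ} (ha : 0 ≤ a) (hb : 0 < b) : √(a / (b + a)) ∈ Ico 0 1 := by
  have hlt : a / (b + a) < 1 := (div_lt_one (by positivity)).mpr (lt_add_of_pos_left a hb)
  exact ⟨Real.sqrt_nonneg _, (Real.sqrt_lt' one_pos).mpr (by simpa using hlt)⟩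

theorem hBro_nonneg {s : ℝ} (hs : s ∈ Icc 0 1) : 0 ≤ hBro s :=
  div_nonneg (sq_nonneg _) (mul_nonneg hs.1 (sub_nonneg.mpr hs.2))

theorem hBro_half_mul_one_add (r : ℝ) : hBro (1 / 2 * (1 + r)) = 4 * (r ^ 2 / (1 - r ^ 2)) := by
  have hnum : (1 - 2 * (1 / 2 * (1 + r))) ^ 2 = r ^ 2 := by ring
  have hden : 1 / 2 * (1 + r) * (1 - 1 / 2 * (1 + r)) = (1 - r ^ 2) / 4 := by ring
  rw [hBro, hnum, hden, div_div_eq_mul_div, mul_comm, mul_div_assoc]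

theorem hBro_half : hBro (1 / 2) = 0 := by
  simpa using hBro_half_mul_one_add 0

theorem fBro_half (x : ℝ) : fBro x (1 / 2) = 1 / 2 := by
  rw [fBro, hBro_half, zero_div, Real.sqrt_zero, add_zero, mul_one]

theorem fBro_mem_Ico {x s : ℝ} (hx : 0 < x) (hs : 0 ≤ hBro s) : fBro x s ∈ Ico (1 / 2) 1 := by
  obtain ⟨hnonneg, hlt⟩ := sqrt_div_add_mem_Ico hs (b := 4 * x⁻¹) (by positivity)
  constructor <;> rw [fBro] <;> linarith

theorem hBro_fBro {x s : ℝ} (hx : 0 < x) (hs : 0 ≤ hBro s) : hBro (fBro x s) = x * hBro s := by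
  have hden : 0 < 4 * x⁻¹ + hBro s := by positivity
  calc hBro (fBro x s)
      = 4 * (hBro s / (4 * x⁻¹ + hBro s) / (1 - hBro s / (4 * x⁻¹ + hBro s))) := by
        rw [fBro, hBro_half_mul_one_add, Real.sq_sqrt (by positivity)]
    _ = 4 * (hBro s / (4 * x⁻¹)) := by rw [div_add_div_one_sub_div_add hden.ne']
    _ = x * hBro s := by field_simp

theorem fBro_basic_properties_general {x s : ℝ} (hx : 0 < x) (hs : s ∈ Ioo 0 1) :
    fBro x s ∈ Ico (1 / 2) 1 ∧ fBro x (1 / 2) = 1 / 2 ∧ hBro (fBro x s) = x * hBro s :=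
  have hh : 0 ≤ hBro s := hBro_nonneg (Ioo_subset_Icc_self hs)
  ⟨fBro_mem_Ico hx hh, fBro_half x, hBro_fBro hx hh⟩

/-- **Basic properties of the Brownian locally largest growing family.**  For `x > 0` and
`s ∈ [1/2, 1)`: `𝚏_x(s) ∈ [1/2, 1)`, `𝚏_x(1/2) = 1/2`, and `h(𝚏_x(s)) = x·h(s)`. -/
theorem fBro_basic_properties :
    ∀ x > (0:ℝ), ∀ s ∈ Ico ((1:ℝ)/2) 1,
      fBro x s ∈ Ico ((1:ℝ)/2) 1 ∧ fBro x (1/2) = 1/2 ∧ hBro (fBro x s) = x * hBro s :=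
  fun _ hx _ hs => fBro_basic_properties_general hx ⟨one_half_pos.trans_le hs.1, hs.2⟩
end

section
/- For every x > 0 and every measurable φ : [1/2, 1) → [0, ∞], one has the identity in [0, ∞]: ∫_{1/2}^1 φ(𝚏_x(s))·(s(1 − s))^{−3/2} ds = x^{−1/2} · ∫_{1/2}^1 φ(s)·(s(1 − s))^{−3/2} ds. That is, the pushforward of the measure with density (s(1−s))^{−3/2} on (1/2, 1) under 𝚏_x equals x^{−1/2} times that measure (quasi-preservation with self-similarity index α = 1/2). -/
open MeasureTheory Set
open scoped ENNReal

/-!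
The primitive `w(s) = 2(2s - 1) / √(s(1 - s))` of the splitting density maps `[1/2, 1)` bijectively
onto `[0, ∞)`, so it carries the splitting measure to Lebesgue measure on `[0, ∞)`. Since
`h(s) = w(s)² / 4`, in the coordinate `w` the map `𝚏_x` is the dilation `w ↦ √x · w`, which
multiplies Lebesgue measure by `x^{-1/2}`.
-/

theorem map_map_eq_smul_of_semiconj {α β : Type*} [MeasurableSpace α] [MeasurableSpace β]
    {μ : Measure α} {f : β → β} {g : α → β} {T : α → α} {c : ℝ≥0∞} (hf : Measurable f)
    (hg : Measurable g) (hT : Measurable T) (hfg : f ∘ g =ᵐ[μ] g ∘ T) (hμ : μ.map T = c • μ) :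
    (μ.map g).map f = c • μ.map g := by
  calc (μ.map g).map f = μ.map (f ∘ g) := Measure.map_map hf hg
    _ = μ.map (g ∘ T) := Measure.map_congr hfg
    _ = (μ.map T).map g := (Measure.map_map hg hT).symm
    _ = c • μ.map g := by rw [hμ, Measure.map_smul]

theorem map_restrict_image_eq_withDensity_abs_deriv {S : Set ℝ} {F F' g : ℝ → ℝ}
    (hS : MeasurableSet S) (hF : ∀ s ∈ S, HasDerivWithinAt F (F' s) S s) (hg : Measurable g)
    (hgF : LeftInvOn g F S) :
    (volume.restrict (F '' S)).map g
      = (volume.restrict S).withDensity fun s => ENNReal.ofReal |F' s| := by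
  set ν := (volume.restrict S).withDensity fun s => ENNReal.ofReal |F' s|
  have hν : ν ≪ volume.restrict S := withDensity_absolutelyContinuous _ _
  have hF_meas : AEMeasurable F ν :=
    (ContinuousOn.aemeasurable (fun s hs => (hF s hs).continuousWithinAt) hS).mono_ac hν
  have hνF : ν.map F = volume.restrict (F '' S) := by
    simpa only [ContinuousLinearMap.det_toSpanSingleton] using
      map_withDensity_abs_det_fderiv_eq_addHaar volume hS.nullMeasurableSet
        (fun s hs => (hF s hs).hasFDerivWithinAt) hgF.injOn
  have hgF_ae : g ∘ F =ᵐ[ν] id := hν.ae_le (ae_restrict_of_forall_mem hS hgF)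
  calc (volume.restrict (F '' S)).map g = ν.map (g ∘ F) := by
        rw [← hνF, AEMeasurable.map_map_of_aemeasurable hg.aemeasurable hF_meas]
    _ = ν := by rw [Measure.map_congr hgF_ae, Measure.map_id]

theorem map_mul_left_volume_restrict_Ici_zero {c : ℝ} (hc : 0 < c) :
    (volume.restrict (Ici (0 : ℝ))).map (c * ·)
      = ENNReal.ofReal c⁻¹ • volume.restrict (Ici (0 : ℝ)) := by
  have hpre : (c * ·) ⁻¹' Ici (0 : ℝ) = Ici 0 := by
    ext w
    simp [hc]
  conv_lhs => rw [← hpre]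
  rw [← Measure.restrict_map (by fun_prop) measurableSet_Ici, Real.map_volume_mul_left hc.ne',
    Measure.restrict_smul, abs_of_pos (inv_pos.2 hc)]

/-- The primitive of the splitting density `(s(1 - s))^{-3/2}` that vanishes at `1/2`, used as a
coordinate on `[1/2, 1)`. -/
noncomputable def splitCoord (s : ℝ) : ℝ := 2 * (2 * s - 1) / √(s * (1 - s))

/-- The inverse of the coordinate `splitCoord`, extended to all of `ℝ` by the same formula. -/
noncomputable def splitOfCoord (w : ℝ) : ℝ := (1 / 2) * (1 + w / √(16 + w ^ 2))

theorem mul_one_sub_pos {s : ℝ} (hs : s ∈ Ioo (0 : ℝ) 1) : 0 < s * (1 - s) :=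
  mul_pos hs.1 (sub_pos.2 hs.2)

theorem hasDerivAt_splitCoord {s : ℝ} (hs : s ∈ Ioo (0 : ℝ) 1) :
    HasDerivAt splitCoord ((s * (1 - s)) ^ (-(3 : ℝ) / 2)) s := by
  have hpos := mul_one_sub_pos hs
  have hnum : HasDerivAt (fun s : ℝ => 2 * (2 * s - 1)) 4 s :=
    ((((hasDerivAt_id s).const_mul 2).sub_const 1).const_mul 2).congr_deriv (by norm_num)
  have hden : HasDerivAt (fun s : ℝ => s * (1 - s)) (1 - 2 * s) s :=
    ((hasDerivAt_id s).mul ((hasDerivAt_id s).const_sub 1)).congr_deriv (by simp only [id]; ring)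
  have hrpow : (s * (1 - s)) ^ (-(3 : ℝ) / 2) = 1 / √(s * (1 - s)) ^ 3 := by
    rw [Real.sqrt_eq_rpow, ← Real.rpow_mul_natCast hpos.le, one_div, ← Real.rpow_neg hpos.le]
    norm_num
  refine (hnum.div (hden.sqrt hpos.ne') (Real.sqrt_pos.2 hpos).ne').congr_deriv ?_
  rw [hrpow]
  have hr := Real.sqrt_pos.2 hpos
  have hsq := Real.sq_sqrt hpos.le
  set r := √(s * (1 - s))
  field_simp
  linear_combination 4 * hsq

theorem splitCoord_sq {s : ℝ} (hs : s ∈ Ioo (0 : ℝ) 1) :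
    splitCoord s ^ 2 = 4 * hBro s := by
  rw [splitCoord, hBro, div_pow, Real.sq_sqrt (mul_one_sub_pos hs).le]
  ring

theorem splitOfCoord_splitCoord {s : ℝ} (hs : s ∈ Ioo (0 : ℝ) 1) :
    splitOfCoord (splitCoord s) = s := by
  have hpos := mul_one_sub_pos hs
  have hnorm : √(16 + splitCoord s ^ 2) = 2 / √(s * (1 - s)) := by
    rw [Real.sqrt_eq_iff_mul_self_eq (by positivity) (by positivity), splitCoord_sq hs, hBro,
      div_mul_div_comm, Real.mul_self_sqrt hpos.le]
    have hs_ne : s ≠ 0 := hs.1.ne'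
    have hs_sub_ne : 1 - s ≠ 0 := (sub_pos.2 hs.2).ne'
    field_simp
    ring
  rw [splitOfCoord, hnorm, splitCoord, div_div_div_cancel_right₀ (Real.sqrt_pos.2 hpos).ne']
  ring

theorem splitOfCoord_mul_one_sub (w : ℝ) :
    splitOfCoord w * (1 - splitOfCoord w) = (2 / √(16 + w ^ 2)) ^ 2 := by
  have hsq : √(16 + w ^ 2) ^ 2 = 16 + w ^ 2 := Real.sq_sqrt (by positivity)
  have hr : 0 < √(16 + w ^ 2) := by positivity
  rw [splitOfCoord]
  set r := √(16 + w ^ 2)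
  field_simp
  linear_combination hsq

theorem splitCoord_splitOfCoord (w : ℝ) : splitCoord (splitOfCoord w) = w := by
  rw [splitCoord, splitOfCoord_mul_one_sub, Real.sqrt_sq (by positivity), splitOfCoord]
  field_simp
  ring

theorem splitOfCoord_mem_Ioo (w : ℝ) : splitOfCoord w ∈ Ioo (0 : ℝ) 1 := by
  have hpos : 0 < splitOfCoord w * (1 - splitOfCoord w) := by
    rw [splitOfCoord_mul_one_sub]
    positivity
  constructor <;> nlinarith

theorem splitOfCoord_mem_Ico {w : ℝ} (hw : 0 ≤ w) : splitOfCoord w ∈ Ico (1 / 2 : ℝ) 1 := by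
  have hnonneg : 0 ≤ w / √(16 + w ^ 2) := by positivity
  refine ⟨?_, (splitOfCoord_mem_Ioo w).2⟩
  rw [splitOfCoord]
  linarith

theorem hBro_splitOfCoord (w : ℝ) : hBro (splitOfCoord w) = w ^ 2 / 4 := by
  have hsq := splitCoord_sq (splitOfCoord_mem_Ioo w)
  rw [splitCoord_splitOfCoord] at hsq
  linarith

theorem splitCoord_nonneg {s : ℝ} (hs : 1 / 2 ≤ s) : 0 ≤ splitCoord s :=
  div_nonneg (by linarith) (Real.sqrt_nonneg _)

theorem image_splitCoord_Ico : splitCoord '' Ico (1 / 2) 1 = Ici 0 :=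
  (InvOn.bijOn (f' := splitOfCoord)
    ⟨fun _ hs => splitOfCoord_splitCoord (Ico_subset_Ioo_left one_half_pos hs),
      fun w _ => splitCoord_splitOfCoord w⟩
    (fun _ hs => splitCoord_nonneg hs.1) fun _ hw => splitOfCoord_mem_Ico hw).image_eq

theorem measurable_splitOfCoord : Measurable splitOfCoord := by
  unfold splitOfCoord
  fun_prop

theorem measurable_fBro (x : ℝ) : Measurable (fBro x) := by
  unfold fBro hBro
  fun_prop

theorem fBro_splitOfCoord {x w : ℝ} (hx : 0 < x) (hw : 0 ≤ w) :
    fBro x (splitOfCoord w) = splitOfCoord (√x * w) := by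
  have hratio : w ^ 2 / 4 / (4 * x⁻¹ + w ^ 2 / 4) = (√x * w) ^ 2 / (16 + (√x * w) ^ 2) := by
    rw [mul_pow, Real.sq_sqrt hx.le]
    field_simp
    ring
  rw [fBro, hBro_splitOfCoord, hratio, Real.sqrt_div (sq_nonneg _), Real.sqrt_sq (by positivity),
    splitOfCoord]

/-- The splitting measure of the Brownian continuum random tree: density `(s(1 - s))^{-3/2}` on
`[1/2, 1)`, regarded as a measure on `ℝ`. -/
noncomputable def splittingMeasure : Measure ℝ :=
  (volume.restrict (Ico (1 / 2) 1)).withDensity fun s =>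
    ENNReal.ofReal ((s * (1 - s)) ^ (-(3 : ℝ) / 2))

theorem lintegral_splittingMeasure {φ : ℝ → ℝ≥0∞} (hφ : Measurable φ) :
    ∫⁻ s, φ s ∂splittingMeasure
      = ∫⁻ s in Ico ((1 : ℝ) / 2) 1, φ s * ENNReal.ofReal ((s * (1 - s)) ^ (-(3 : ℝ) / 2)) := by
  rw [splittingMeasure, lintegral_withDensity_eq_lintegral_mul _ (by fun_prop) hφ]
  simp only [Pi.mul_apply, mul_comm]

theorem splittingMeasure_eq_map_splitOfCoord :
    splittingMeasure = (volume.restrict (Ici (0 : ℝ))).map splitOfCoord := by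
  have hsub : Ico (1 / 2 : ℝ) 1 ⊆ Ioo 0 1 := Ico_subset_Ioo_left one_half_pos
  rw [← image_splitCoord_Ico, map_restrict_image_eq_withDensity_abs_deriv measurableSet_Ico
    (fun s hs => (hasDerivAt_splitCoord (hsub hs)).hasDerivWithinAt)
    measurable_splitOfCoord fun s hs => splitOfCoord_splitCoord (hsub hs)]
  refine withDensity_congr_ae (ae_restrict_of_forall_mem measurableSet_Ico fun s hs => ?_)
  simp only [abs_of_pos (Real.rpow_pos_of_pos (mul_one_sub_pos (hsub hs)) _)]

theorem map_fBro_splittingMeasure {x : ℝ} (hx : 0 < x) :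
    splittingMeasure.map (fBro x) = ENNReal.ofReal (x ^ (-(1 : ℝ) / 2)) • splittingMeasure := by
  have hscale : (√x)⁻¹ = x ^ (-(1 : ℝ) / 2) := by
    rw [Real.sqrt_eq_rpow, ← Real.rpow_neg hx.le, neg_div]
  rw [splittingMeasure_eq_map_splitOfCoord, ← hscale]
  exact map_map_eq_smul_of_semiconj (measurable_fBro x) measurable_splitOfCoord (by fun_prop)
    (ae_restrict_of_forall_mem measurableSet_Ici fun _ hw => fBro_splitOfCoord hx hw)
    (map_mul_left_volume_restrict_Ici_zero (Real.sqrt_pos.2 hx))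

/-- **Quasi-preservation of the Brownian splitting density by `𝚏` (index `α = 1/2`).**
For every `x > 0` and measurable `φ : [1/2, 1) → [0,∞]`,
`∫_{1/2}^1 φ(𝚏_x(s))·(s(1−s))^{−3/2} ds = x^{−1/2}·∫_{1/2}^1 φ(s)·(s(1−s))^{−3/2} ds`;
equivalently, the pushforward under `𝚏_x` of the measure with density `(s(1−s))^{−3/2}`
on `[1/2, 1)` equals `x^{−1/2}` times that measure. -/
theorem fBro_quasi_preservation :
    ∀ x > (0:ℝ), (∀ φ : ℝ → ℝ≥0∞, Measurable φ →
      (∫⁻ s in Ico ((1:ℝ)/2) 1,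
          φ (fBro x s) * ENNReal.ofReal ((s * (1 - s)) ^ (-(3:ℝ)/2)))
        = ENNReal.ofReal (x ^ (-(1:ℝ)/2)) *
          ∫⁻ s in Ico ((1:ℝ)/2) 1,
            φ s * ENNReal.ofReal ((s * (1 - s)) ^ (-(3:ℝ)/2))) ∧
      Measure.map (fun s => fBro x s)
          ((volume.restrict (Ico ((1:ℝ)/2) 1)).withDensity fun s =>
            ENNReal.ofReal ((s * (1 - s)) ^ (-(3:ℝ)/2)))
        = ENNReal.ofReal (x ^ (-(1:ℝ)/2)) •
          ((volume.restrict (Ico ((1:ℝ)/2) 1)).withDensity fun s =>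
            ENNReal.ofReal ((s * (1 - s)) ^ (-(3:ℝ)/2))) := by
  intro x hx
  refine ⟨fun φ hφ => ?_, map_fBro_splittingMeasure hx⟩
  have hf := measurable_fBro x
  rw [← lintegral_splittingMeasure hφ,
    ← lintegral_splittingMeasure (φ := fun s => φ (fBro x s)) (hφ.comp hf), ← smul_eq_mul,
    ← lintegral_smul_measure, ← map_fBro_splittingMeasure hx, lintegral_map hφ hf]
end
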